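/- If (Y, d, H^h) is a compact metric space that satisfies property (H∞), then there exists a family of 2^ℵ₀ pairwise disjoint compact subsets of Y, each of which is not σ-finite with respect to H^h. -/

import Mathlib

open MeasureTheory Set Filter Topology
open scoped NNReal ENNReal

universe u v

/-- A Hausdorff (gauge) function `h : [0,∞) → [0,∞]`: nondecreasing, right-continuous,
and positive on positive arguments. -/
structure IsHausdorffFunction (h : ℝ≥0 → ℝ≥0∞) : Prop where
  mono : Monotone h
  right_continuous : ∀ t : ℝ≥0, ContinuousWithinAt h (Set.Ici t) t
  pos : ∀ t : ℝ≥0, 0 < t → 0 < h t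

/-- `h` is of finite order: `limsup_{t→0+} h(3t)/h(t) < ∞`. -/
def FiniteOrder (h : ℝ≥0 → ℝ≥0∞) : Prop :=
  Filter.limsup (fun t : ℝ≥0 => h (3 * t) / h t) (nhdsWithin 0 (Set.Ioi 0)) < ⊤

/-- The Hausdorff (outer) measure built from the gauge `h`:
`H^h(E) = sup_{δ>0} inf { Σ h(diam Uᵢ) : E ⊆ ⋃ Uᵢ, diam Uᵢ ≤ δ }`. -/
noncomputable def hausdorffM {Z : Type*} [EMetricSpace Z] (h : ℝ≥0 → ℝ≥0∞) :
    MeasureTheory.OuterMeasure Z :=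
  MeasureTheory.OuterMeasure.mkMetric (fun d => h d.toNNReal)

/-- A set `S` is σ-finite with respect to an outer measure `μ` if it is a countable union
of Carathéodory-measurable sets of finite measure. -/
def SigmaFiniteSet {Z : Type*} (μ : MeasureTheory.OuterMeasure Z) (S : Set Z) : Prop :=
  ∃ A : ℕ → Set Z, (∀ n, μ.IsCaratheodory (A n) ∧ μ (A n) < ⊤) ∧ S = ⋃ n, A n

/-- A metric space has finite structural dimension if for every `ξ > 0` there are `N` and
`δ₀ > 0` such that every set of diameter `δ ≤ δ₀` can be covered by `N` sets of diameter
at most `ξ·δ`. -/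
def FiniteStructuralDim (Z : Type*) [EMetricSpace Z] : Prop :=
  ∀ ξ : ℝ≥0, 0 < ξ → ∃ (N : ℕ) (δ₀ : ℝ≥0), 0 < δ₀ ∧
    ∀ s : Set Z, EMetric.diam s ≤ δ₀ →
      ∃ U : Fin N → Set Z, s ⊆ ⋃ i, U i ∧ ∀ i, EMetric.diam (U i) ≤ ξ * EMetric.diam s

/-- Property (H) for a subspace `Y` of the complete separable metric space `Z`. -/
structure PropertyH {Z : Type*} [MetricSpace Z] (Y : Set Z) (h : ℝ≥0 → ℝ≥0∞) : Prop where
  complete : CompleteSpace Z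
  separable : TopologicalSpace.SeparableSpace Z
  analytic : MeasureTheory.AnalyticSet Y
  hausdorff : IsHausdorffFunction h
  cont : Continuous h
  zero : h 0 = 0
  alt : FiniteOrder h ∨ FiniteStructuralDim Z ∨ ∀ x y z : Z, dist x z ≤ max (dist x y) (dist y z)

/-- Property (H∞): property (H) together with non-σ-finiteness of `Y` w.r.t. `H^h`. -/
def PropertyHInf {Z : Type*} [MetricSpace Z] (Y : Set Z) (h : ℝ≥0 → ℝ≥0∞) : Prop :=
  PropertyH Y h ∧ ¬ SigmaFiniteSet (hausdorffM h) Y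

/-- Property (Aκ): `X` is a union of κ-many measurable sets of finite measure, and
κ-many null sets always union to a null set. -/
def PropertyA {X : Type u} (μ : MeasureTheory.OuterMeasure X) (κ : Cardinal.{u}) : Prop :=
  (∃ (ι : Type u) (A : ι → Set X), Cardinal.mk ι = κ ∧ (⋃ i, A i) = Set.univ ∧
      ∀ i, μ.IsCaratheodory (A i) ∧ μ (A i) < ⊤) ∧
  ∀ (ι : Type u) (A : ι → Set X), Cardinal.mk ι = κ → (∀ i, μ (A i) = 0) → μ (⋃ i, A i) = 0

/-- A set is perfect if it is closed and every open set meeting it meets it in an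
infinite set. -/
def PerfectSet {X : Type*} [TopologicalSpace X] (C : Set X) : Prop :=
  IsClosed C ∧ ∀ O : Set X, IsOpen O → (O ∩ C).Nonempty → (O ∩ C).Infinite

/-- The gauge `d ↦ d^s`. -/
noncomputable def sGauge (s : ℝ≥0) : ℝ≥0 → ℝ≥0∞ := fun d => (d : ℝ≥0∞) ^ (s : ℝ)

/-- Hausdorff–Besicovitch dimension: the supremum of all `s ≥ 0` with `H^{d^s}(E) > 0`. -/
noncomputable def hDim {Z : Type*} [EMetricSpace Z] (E : Set Z) : ℝ≥0∞ :=
  ⨆ (s : ℝ≥0) (_ : 0 < hausdorffM (sGauge s) E), (s : ℝ≥0∞)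

/-!
Let `k = min h 1`, and suppose that the compact space `Y` is not σ-finite for the Hausdorff measure
of `k`. Then `k` can be damped by a slowly varying factor `φ` with `φ(t) → 0` as `t → 0` such that
the Hausdorff content of `Y` for the gauge `φ k` is still positive. Each of the three alternatives
for `h` bounds the content of the union of all sets of diameter at most `diam U` meeting `U` by a
constant times `φ(diam U) k(diam U)`, and a duality argument then gives a nonzero measure `μ` with
`μ U ≤ C φ(diam U) k(diam U)` for open `U`.

Such a `μ` has no point masses, so at each small scale `ρ` its mass can be moved by less than `ρ`
onto either of two disjoint compact sets, at the cost of a factor `8` in the density. Iterating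
along a sequence of scales that decreases fast enough yields a binary tree of measures of constant
mass whose supports form a Cantor scheme. Since `φ → 0` beats the factors `8`, along each branch
`ν n U ≤ ε k(diam U)` for `diam U` small and `n` large, and so the compact intersection of the
supports along a branch is not σ-finite. Intersections along different branches are disjoint.
-/

open TopologicalSpace (Compacts Opens)

section Diameter

variable {X : Type*} [MetricSpace X]

/-- The diameter of a set as a nonnegative real; in a compact space it is never a junk value. -/
noncomputable def nndiam (U : Set X) : ℝ≥0 := (Metric.ediam U).toNNReal

lemma nndiam_closure (U : Set X) : nndiam (closure U) = nndiam U := by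
  rw [nndiam, Metric.ediam_closure, nndiam]

variable [CompactSpace X] {U V : Set X} {d : ℝ≥0}

lemma coe_nndiam (U : Set X) : (nndiam U : ℝ≥0∞) = Metric.ediam U :=
  ENNReal.coe_toNNReal (Metric.isBounded_iff_ediam_ne_top.1 (Bornology.IsBounded.all U))

lemma nndiam_le_iff : nndiam U ≤ d ↔ ∀ x ∈ U, ∀ y ∈ U, nndist x y ≤ d := by
  rw [← ENNReal.coe_le_coe, coe_nndiam, Metric.ediam_le_iff]
  simp only [edist_nndist, ENNReal.coe_le_coe]

lemma nndist_le_nndiam {x y : X} (hx : x ∈ U) (hy : y ∈ U) : nndist x y ≤ nndiam U :=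
  nndiam_le_iff.1 le_rfl x hx y hy

lemma nndiam_mono (hUV : U ⊆ V) : nndiam U ≤ nndiam V :=
  nndiam_le_iff.2 fun _ hx _ hy => nndist_le_nndiam (hUV hx) (hUV hy)

lemma nndiam_thickening_le (r : ℝ≥0) (U : Set X) :
    nndiam (Metric.thickening r U) ≤ nndiam U + 2 * r := by
  have h := Metric.ediam_thickening_le (s := U) r
  rw [← coe_nndiam, ← coe_nndiam] at h
  exact_mod_cast h

lemma tendsto_nndiam_thickening (U : Set X) :
    Tendsto (fun r : ℝ≥0 => nndiam (Metric.thickening r U)) (𝓝[>] 0) (𝓝 (nndiam U)) := by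
  have hlim : Tendsto (fun r : ℝ≥0 => nndiam U + 2 * r) (𝓝[>] 0) (𝓝 (nndiam U)) := by
    have : Continuous fun r : ℝ≥0 => nndiam U + 2 * r := by fun_prop
    simpa using (this.tendsto 0).mono_left nhdsWithin_le_nhds
  refine tendsto_of_tendsto_of_tendsto_of_le_of_le' tendsto_const_nhds hlim ?_
    (Eventually.of_forall fun r => nndiam_thickening_le r U)
  filter_upwards [self_mem_nhdsWithin] with r hr
  exact nndiam_mono (Metric.self_subset_thickening (NNReal.coe_pos.2 hr) U)

lemma continuous_nndiam : Continuous fun K : Compacts X => nndiam (K : Set X) := by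
  refine continuous_iff_continuousAt.2 fun K => tendsto_order.2 ⟨fun a ha => ?_, fun a ha => ?_⟩
  · obtain ⟨x, hx, y, hy, hxy⟩ : ∃ x ∈ K, ∃ y ∈ K, a < nndist x y := by
      by_contra! h
      exact ha.not_ge (nndiam_le_iff.2 h)
    have hopen : IsOpen {p : X × X | a < nndist p.1 p.2} :=
      isOpen_lt continuous_const (by fun_prop)
    have hmeet := ((Compacts.isOpen_inter_nonempty_of_isOpen hopen).preimage
      (Compacts.continuous_prod.comp (continuous_id.prodMk continuous_id))).mem_nhds
      (show K ∈ _ from ⟨(x, y), ⟨hx, hy⟩, hxy⟩)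
    filter_upwards [hmeet] with L ⟨p, ⟨hp₁, hp₂⟩, hp⟩
    exact lt_of_lt_of_le hp (nndist_le_nndiam hp₁ hp₂)
  · obtain ⟨r, hr, hr0⟩ := (((tendsto_nndiam_thickening (K : Set X)).eventually_lt_const ha).and
      self_mem_nhdsWithin).exists
    filter_upwards [(Compacts.isOpen_subsets_of_isOpen Metric.isOpen_thickening).mem_nhds
      (Metric.self_subset_thickening (NNReal.coe_pos.2 hr0) (K : Set X))] with L hL
    exact (nndiam_mono hL).trans_lt hr

end Diameter

section CoveredByFinite

variable {α : Type*}

/-- `S` is covered by countably many sets of finite `μ`-measure. In contrast to `SigmaFiniteSet`,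
the sets need not be measurable; these `S` form a σ-ideal. -/
def CoveredByFinite (μ : OuterMeasure α) (S : Set α) : Prop :=
  ∃ A : ℕ → Set α, (∀ n, μ (A n) < ⊤) ∧ S ⊆ ⋃ n, A n

namespace CoveredByFinite

variable {μ : OuterMeasure α} {S T : Set α}

lemma mono (hT : CoveredByFinite μ T) (hST : S ⊆ T) : CoveredByFinite μ S :=
  let ⟨A, hA, hTA⟩ := hT
  ⟨A, hA, hST.trans hTA⟩

lemma of_lt_top (h : μ S < ⊤) : CoveredByFinite μ S :=
  ⟨fun _ => S, fun _ => h, subset_iUnion (fun _ : ℕ => S) 0⟩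

lemma iUnion {ι : Type*} [Countable ι] {S : ι → Set α} (h : ∀ i, CoveredByFinite μ (S i)) :
    CoveredByFinite μ (⋃ i, S i) := by
  cases isEmpty_or_nonempty ι with
  | inl hι => exact of_lt_top (by simp)
  | inr hι =>
    choose A hA hSA using h
    obtain ⟨e, he⟩ := exists_surjective_nat (ι × ℕ)
    refine ⟨fun n => A (e n).1 (e n).2, fun n => hA _ _, iUnion_subset fun i x hx => ?_⟩
    obtain ⟨m, hm⟩ := mem_iUnion.1 (hSA i hx)
    obtain ⟨n, hn⟩ := he (i, m)
    exact mem_iUnion.2 ⟨n, by rwa [hn]⟩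

lemma union (hS : CoveredByFinite μ S) (hT : CoveredByFinite μ T) : CoveredByFinite μ (S ∪ T) := by
  rw [union_eq_iUnion]
  exact iUnion (Bool.forall_bool.2 ⟨hT, hS⟩)

end CoveredByFinite

end CoveredByFinite

section HausdorffMeasure

variable {X Z : Type*} [MetricSpace X] [MetricSpace Z] {h h' : ℝ≥0 → ℝ≥0∞}

lemma hausdorffM_congr (H : h =ᶠ[𝓝 0] h') : (hausdorffM h : OuterMeasure X) = hausdorffM h' := by
  have H' : ∀ᶠ d : ℝ≥0∞ in 𝓝 0, h d.toNNReal = h' d.toNNReal :=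
    (ENNReal.tendsto_toNNReal ENNReal.zero_ne_top).eventually H
  exact le_antisymm (OuterMeasure.mkMetric_mono (H'.mono fun _ hd => hd.le))
    (OuterMeasure.mkMetric_mono (H'.mono fun _ hd => hd.ge))

lemma hausdorffM_eq_mkMetric_min (h : ℝ≥0 → ℝ≥0∞) :
    (hausdorffM h : OuterMeasure X) = OuterMeasure.mkMetric fun d => h (min d 1).toNNReal := by
  have H : ∀ᶠ d : ℝ≥0∞ in 𝓝 0, h d.toNNReal = h (min d 1).toNNReal := by
    filter_upwards [Iio_mem_nhds one_pos] with d hd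
    rw [min_eq_left (mem_Iio.1 hd).le]
  exact le_antisymm (OuterMeasure.mkMetric_mono (H.mono fun _ hd => hd.le))
    (OuterMeasure.mkMetric_mono (H.mono fun _ hd => hd.ge))

lemma hausdorffM_image_of_isometry (hh : Monotone h) {f : X → Z} (hf : Isometry f) (A : Set X) :
    hausdorffM h (f '' A) = hausdorffM h A := by
  have hm : Monotone fun d : ℝ≥0∞ => h (min d 1).toNNReal := fun a b hab =>
    hh (ENNReal.toNNReal_mono (by simp) (min_le_min_right 1 hab))
  rw [hausdorffM_eq_mkMetric_min, hausdorffM_eq_mkMetric_min,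
    ← OuterMeasure.isometry_comap_mkMetric _ hf (Or.inl hm), OuterMeasure.comap_apply]

lemma isCaratheodory_hausdorffM [MeasurableSpace X] [BorelSpace X] {S : Set X}
    (hS : MeasurableSet S) : (hausdorffM h : OuterMeasure X).IsCaratheodory S := by
  rw [hausdorffM, ← Measure.mkMetric_toOuterMeasure]
  exact le_toOuterMeasure_caratheodory _ _ hS

lemma CoveredByFinite.sigmaFiniteSet {S : Set X} (hS : CoveredByFinite (hausdorffM h) S)
    (hSc : IsClosed S) : SigmaFiniteSet (hausdorffM h) S := by
  borelize X
  obtain ⟨A, hA, hSA⟩ := hS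
  let μ : Measure X := Measure.mkMetric fun d => h d.toNNReal
  have hμ (T : Set X) : hausdorffM h T = μ T := by
    rw [hausdorffM, ← Measure.mkMetric_toOuterMeasure]; rfl
  refine ⟨fun n => toMeasurable μ (A n) ∩ S, fun n => ⟨?_, ?_⟩, ?_⟩
  · exact isCaratheodory_hausdorffM ((measurableSet_toMeasurable _ _).inter hSc.measurableSet)
  · refine (measure_mono inter_subset_left).trans_lt ?_
    rw [hμ, measure_toMeasurable, ← hμ]
    exact hA n
  · rw [← iUnion_inter, eq_comm, inter_eq_right]
    exact hSA.trans (iUnion_mono fun n => subset_toMeasurable _ _)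

lemma SigmaFiniteSet.coveredByFinite {α : Type*} {μ : OuterMeasure α} {S : Set α}
    (hS : SigmaFiniteSet μ S) : CoveredByFinite μ S :=
  let ⟨A, hA, hSA⟩ := hS
  ⟨A, fun n => (hA n).2, hSA.subset⟩

lemma CoveredByFinite.preimage (hh : Monotone h) {f : X → Z} (hf : Isometry f) {S : Set Z}
    (hS : CoveredByFinite (hausdorffM h) S) : CoveredByFinite (hausdorffM h) (f ⁻¹' S) := by
  obtain ⟨A, hA, hSA⟩ := hS
  refine ⟨fun n => f ⁻¹' A n, fun n => ?_, by
    rw [← preimage_iUnion]; exact preimage_mono hSA⟩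
  rw [← hausdorffM_image_of_isometry hh hf]
  exact (measure_mono (image_preimage_subset _ _)).trans_lt (hA n)

lemma CoveredByFinite.image (hh : Monotone h) {f : X → Z} (hf : Isometry f) {S : Set X}
    (hS : CoveredByFinite (hausdorffM h) S) : CoveredByFinite (hausdorffM h) (f '' S) := by
  obtain ⟨A, hA, hSA⟩ := hS
  refine ⟨fun n => f '' A n, fun n => ?_, by
    rw [← image_iUnion]; exact image_mono hSA⟩
  rw [hausdorffM_image_of_isometry hh hf]
  exact hA n

lemma CoveredByFinite.of_le_mul {k k' : ℝ≥0 → ℝ≥0} {c : ℝ≥0} (hc : ∀ t, k t ≤ c * k' t)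
    {S : Set X} (hS : CoveredByFinite (hausdorffM fun t => (k' t : ℝ≥0∞)) S) :
    CoveredByFinite (hausdorffM fun t => (k t : ℝ≥0∞)) S := by
  obtain ⟨A, hA, hSA⟩ := hS
  have hle : (hausdorffM (fun t => (k t : ℝ≥0∞)) : OuterMeasure X) ≤
      ((c + 1 : ℝ≥0) : ℝ≥0∞) • hausdorffM fun t => (k' t : ℝ≥0∞) := by
    refine OuterMeasure.mkMetric_mono_smul ENNReal.coe_ne_top (by simp) (Eventually.of_forall ?_)
    intro d
    change (k d.toNNReal : ℝ≥0∞) ≤ ((c + 1 : ℝ≥0) : ℝ≥0∞) * k' d.toNNReal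
    exact mod_cast (hc _).trans (mul_le_mul_left le_self_add _)
  exact ⟨A, fun n => (hle (A n)).trans_lt (ENNReal.mul_lt_top ENNReal.coe_lt_top (hA n)), hSA⟩

variable [CompactSpace X] {k : ℝ≥0 → ℝ≥0}

lemma hausdorffM_apply_lt (hk : k 0 = 0) {A : Set X} {C : ℝ≥0∞}
    (hA : hausdorffM (fun t => (k t : ℝ≥0∞)) A < C) {δ : ℝ≥0} (hδ : 0 < δ) :
    ∃ U : ℕ → Set X, A ⊆ ⋃ i, U i ∧ (∀ i, nndiam (U i) ≤ δ) ∧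
      ∑' i, (k (nndiam (U i)) : ℝ≥0∞) < C := by
  borelize X
  rw [hausdorffM, OuterMeasure.coe_mkMetric, Measure.mkMetric_apply] at hA
  have hA' := (le_iSup₂ (δ : ℝ≥0∞) (ENNReal.coe_pos.2 hδ)).trans_lt hA
  simp only [iInf_lt_iff] at hA'
  obtain ⟨U, hU, hd, hlt⟩ := hA'
  refine ⟨U, hU, fun i => ENNReal.coe_le_coe.1 ((coe_nndiam _).trans_le (hd i)), ?_⟩
  refine (ENNReal.tsum_le_tsum fun i => ?_).trans_lt hlt
  rcases (U i).eq_empty_or_nonempty with h | h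
  · simp [h, nndiam, hk]
  · exact le_iSup_of_le h le_rfl

lemma hausdorffM_le_of_forall_exists_cover {A : Set X} {C : ℝ≥0∞}
    (hA : ∀ δ : ℝ≥0, 0 < δ → ∃ U : ℕ → Set X, A ⊆ ⋃ i, U i ∧ (∀ i, nndiam (U i) ≤ δ) ∧
      ∑' i, (k (nndiam (U i)) : ℝ≥0∞) ≤ C) :
    hausdorffM (fun t => (k t : ℝ≥0∞)) A ≤ C := by
  borelize X
  rw [hausdorffM, OuterMeasure.coe_mkMetric, Measure.mkMetric_apply]
  refine iSup₂_le fun r hr => ?_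
  obtain ⟨δ, hδ, hδr⟩ := ENNReal.lt_iff_exists_nnreal_btwn.1 hr
  obtain ⟨U, hU, hd, hle⟩ := hA δ (ENNReal.coe_pos.1 hδ)
  refine iInf_le_of_le U (iInf_le_of_le hU (iInf_le_of_le (fun i => ?_) ?_))
  · exact (coe_nndiam _).symm.trans_le ((ENNReal.coe_le_coe.2 (hd i)).trans hδr.le)
  · refine le_trans (ENNReal.tsum_le_tsum fun i => ?_) hle
    exact iSup_le fun _ => le_rfl

end HausdorffMeasure

section Content

variable {X : Type*} [MetricSpace X]

/-- The Hausdorff content of the gauge `g`, that is, the outer measure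
`E ↦ inf {∑ g (diam Uᵢ) : E ⊆ ⋃ Uᵢ}` without restriction on the size of the `Uᵢ`. -/
noncomputable def gaugeContent (g : ℝ≥0 → ℝ≥0) : OuterMeasure X :=
  OuterMeasure.boundedBy fun U => (g (nndiam U) : ℝ≥0∞)

variable {k g : ℝ≥0 → ℝ≥0} {E : Set X} {b : ℝ≥0∞}

lemma gaugeContent_le (U : Set X) : gaugeContent g U ≤ g (nndiam U) :=
  OuterMeasure.boundedBy_le U

lemma gaugeContent_le_tsum {ι : Type*} [Countable ι] {U : ι → Set X} (hE : E ⊆ ⋃ i, U i) :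
    gaugeContent g E ≤ ∑' i, (g (nndiam (U i)) : ℝ≥0∞) :=
  (measure_mono hE).trans ((measure_iUnion_le U).trans
    (ENNReal.tsum_le_tsum fun i => gaugeContent_le (U i)))

lemma exists_cover_of_gaugeContent_lt (hg : g 0 = 0) (hE : gaugeContent g E < b) :
    ∃ U : ℕ → Set X, E ⊆ ⋃ i, U i ∧ ∑' i, (g (nndiam (U i)) : ℝ≥0∞) < b := by
  rw [gaugeContent, OuterMeasure.boundedBy_eq_ofFunction (by simp [nndiam, hg]),
    OuterMeasure.ofFunction_apply] at hE
  simpa only [iInf_lt_iff, exists_prop] using hE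

/-- The essential content of the space: the least `g`-content of the complement of a set which
is σ-finite for the Hausdorff measure of `k`. -/
noncomputable def essContent (X : Type*) [MetricSpace X] (k g : ℝ≥0 → ℝ≥0) : ℝ≥0∞ :=
  ⨅ (S : Set X) (_ : CoveredByFinite (hausdorffM fun t => (k t : ℝ≥0∞)) S), gaugeContent g Sᶜ

lemma essContent_le {S : Set X} (hS : CoveredByFinite (hausdorffM fun t => (k t : ℝ≥0∞)) S) :
    essContent X k g ≤ gaugeContent g Sᶜ :=
  iInf₂_le S hS

lemma essContent_le_gaugeContent_univ : essContent X k g ≤ gaugeContent g (univ : Set X) := by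
  rw [← compl_empty]
  exact essContent_le (CoveredByFinite.of_lt_top (by simp))

variable [CompactSpace X]

lemma exists_isOpen_superset (hg : Continuous g) (U : Set X) {d ε : ℝ≥0} (hd : nndiam U < d)
    (hε : 0 < ε) :
    ∃ O : Set X, IsOpen O ∧ U ⊆ O ∧ nndiam O < d ∧ g (nndiam O) ≤ g (nndiam U) + ε := by
  have hlim := tendsto_nndiam_thickening U
  obtain ⟨r, ⟨hrd, hrg⟩, hr⟩ := ((hlim.eventually_lt_const hd).and
    (((hg.tendsto _).comp hlim).eventually_lt_const (lt_add_of_pos_right _ hε)) |>.and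
      self_mem_nhdsWithin).exists
  exact ⟨Metric.thickening r U, Metric.isOpen_thickening,
    Metric.self_subset_thickening (NNReal.coe_pos.2 hr) U, hrd, hrg.le⟩

lemma exists_isOpen_cover (hg : Continuous g) (U : ℕ → Set X) {d : ℕ → ℝ≥0}
    (hd : ∀ i, nndiam (U i) < d i) {ε : ℝ≥0∞} (hε : ε ≠ 0) :
    ∃ O : ℕ → Set X, (∀ i, IsOpen (O i)) ∧ (∀ i, U i ⊆ O i) ∧ (∀ i, nndiam (O i) < d i) ∧
      ∑' i, (g (nndiam (O i)) : ℝ≥0∞) ≤ ∑' i, (g (nndiam (U i)) : ℝ≥0∞) + ε := by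
  obtain ⟨ε', hε', hsum⟩ := ENNReal.exists_pos_sum_of_countable hε ℕ
  choose O hO hUO hOd hOg using fun i => exists_isOpen_superset hg (U i) (hd i) (hε' i)
  refine ⟨O, hO, hUO, hOd, ?_⟩
  calc ∑' i, (g (nndiam (O i)) : ℝ≥0∞) ≤ ∑' i, ((g (nndiam (U i)) : ℝ≥0∞) + ε' i) :=
        ENNReal.tsum_le_tsum fun i => mod_cast hOg i
    _ ≤ _ := by rw [ENNReal.tsum_add]; gcongr

lemma exists_isOpen_cover_of_gaugeContent_lt (hg : Continuous g) (hg0 : g 0 = 0)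
    (hE : gaugeContent g E < b) :
    ∃ O : ℕ → Set X, (∀ i, IsOpen (O i)) ∧ E ⊆ ⋃ i, O i ∧
      ∑' i, (g (nndiam (O i)) : ℝ≥0∞) < b := by
  obtain ⟨U, hEU, hU⟩ := exists_cover_of_gaugeContent_lt hg0 hE
  obtain ⟨ε, hε, hεb⟩ := ENNReal.lt_iff_exists_add_pos_lt.1 hU
  obtain ⟨O, hO, hUO, -, hle⟩ := exists_isOpen_cover hg U (d := fun i => nndiam (U i) + 1)
    (fun i => lt_add_one _) (ENNReal.coe_pos.2 hε).ne'
  exact ⟨O, hO, hEU.trans (iUnion_mono hUO), hle.trans_lt hεb⟩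

lemma hausdorffM_eq_zero_of_gaugeContent (hk : Monotone k) (hk0 : k 0 = 0)
    (hkpos : ∀ t, 0 < t → 0 < k t) (hE : gaugeContent k E = 0) :
    hausdorffM (fun t => (k t : ℝ≥0∞)) E = 0 := by
  refine le_antisymm (ENNReal.le_of_forall_pos_le_add fun ε hε _ => ?_) zero_le
  refine hausdorffM_le_of_forall_exists_cover fun δ hδ => ?_
  have hlt : gaugeContent k E < ((min ε (k δ) : ℝ≥0) : ℝ≥0∞) := by
    rw [hE]
    exact ENNReal.coe_pos.2 (lt_min hε (hkpos δ hδ))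
  obtain ⟨U, hEU, hU⟩ := exists_cover_of_gaugeContent_lt hk0 hlt
  refine ⟨U, hEU, fun i => ?_, ?_⟩
  · have hi : (k (nndiam (U i)) : ℝ≥0∞) < k δ := (ENNReal.le_tsum i).trans_lt
      (hU.trans_le (ENNReal.coe_le_coe.2 (min_le_right _ _)))
    exact (hk.reflect_lt (ENNReal.coe_lt_coe.1 hi)).le
  · rw [zero_add]
    exact hU.le.trans (ENNReal.coe_le_coe.2 (min_le_left _ _))

lemma essContent_pos (hk : Monotone k) (hk0 : k 0 = 0) (hkpos : ∀ t, 0 < t → 0 < k t)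
    (hX : ¬CoveredByFinite (hausdorffM fun t => (k t : ℝ≥0∞)) (univ : Set X)) :
    0 < essContent X k k := by
  refine pos_iff_ne_zero.2 fun h0 => hX ?_
  have hlt (n : ℕ) : essContent X k k < (n : ℝ≥0∞)⁻¹ := by
    rw [h0]
    exact ENNReal.inv_pos.2 (ENNReal.natCast_ne_top n)
  simp only [essContent, iInf_lt_iff, exists_prop] at hlt
  choose S hS hSlt using hlt
  have hzero : gaugeContent k (⋃ n, S n)ᶜ = 0 := by
    by_contra hne
    obtain ⟨n, hn⟩ := ENNReal.exists_inv_nat_lt hne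
    exact (hn.trans_le (measure_mono (compl_subset_compl.2 (subset_iUnion S n)))).not_gt (hSlt n)
  have hcompl : CoveredByFinite (hausdorffM fun t => (k t : ℝ≥0∞)) (⋃ n, S n)ᶜ :=
    .of_lt_top (by
      rw [hausdorffM_eq_zero_of_gaugeContent hk hk0 hkpos hzero]; exact ENNReal.zero_lt_top)
  rw [← union_compl_self (⋃ n, S n)]
  exact (CoveredByFinite.iUnion hS).union hcompl

end Content

section SortedCover

lemma exists_injective_add_one_mul_le {ι : Type*} {a : ι → ℝ≥0} {b : ℝ≥0} (ha : ∀ i, 0 < a i)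
    (hb : ∑' i, (a i : ℝ≥0∞) ≤ b) :
    ∃ e : ι → ℕ, Function.Injective e ∧ ∀ i, (e i + 1) * a i ≤ b := by
  classical
  -- Hall's condition for the slots `n` with `(n + 1) * a i ≤ b` is Markov's inequality.
  have hall (s : Finset ι) : s.card ≤ (s.biUnion fun i => Finset.range ⌊b / a i⌋₊).card := by
    rcases s.eq_empty_or_nonempty with rfl | hs
    · simp
    obtain ⟨i, his, hi⟩ := s.exists_min_image a hs
    have hcard : s.card * a i ≤ b := by
      calc (s.card : ℝ≥0) * a i ≤ ∑ j ∈ s, a j := by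
            rw [← nsmul_eq_mul]; exact s.card_nsmul_le_sum a _ hi
        _ ≤ b := by exact_mod_cast (ENNReal.sum_le_tsum s).trans hb
    calc s.card ≤ ⌊b / a i⌋₊ := Nat.le_floor ((le_div_iff₀ (ha i)).2 hcard)
      _ = (Finset.range ⌊b / a i⌋₊).card := (Finset.card_range _).symm
      _ ≤ _ := Finset.card_le_card
        (Finset.subset_biUnion_of_mem (fun j => Finset.range ⌊b / a j⌋₊) his)
  obtain ⟨e, hinj, he⟩ := (Finset.all_card_le_biUnion_card_iff_exists_injective _).1 hall
  refine ⟨e, hinj, fun i => (le_div_iff₀ (ha i)).1 ?_⟩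
  have h : e i + 1 ≤ ⌊b / a i⌋₊ := Finset.mem_range.1 (he i)
  exact_mod_cast (Nat.le_floor_iff zero_le).1 h

variable {X : Type*} [MetricSpace X] [CompactSpace X] {g : ℝ≥0 → ℝ≥0} {E : Set X} {b : ℝ≥0}

lemma exists_sorted_cover (hg0 : g 0 = 0) (hE : gaugeContent g E < b) :
    ∃ W : ℕ → Compacts X, E ⊆ ⋃ i, (W i : Set X) ∧
      (∀ i, (i + 1) * g (nndiam (W i : Set X)) ≤ b) ∧
      ∑' i, (g (nndiam (W i : Set X)) : ℝ≥0∞) ≤ b := by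
  obtain ⟨U, hEU, hU⟩ := exists_cover_of_gaugeContent_lt hg0 hE
  obtain ⟨ε, hε, hεb⟩ := ENNReal.lt_iff_exists_add_pos_lt.1 hU
  obtain ⟨ε', hε', hsum⟩ := ENNReal.exists_pos_sum_of_countable (ENNReal.coe_pos.2 hε).ne' ℕ
  let K (i : ℕ) : Compacts X := ⟨closure (U i), isClosed_closure.isCompact⟩
  have hK (i : ℕ) : nndiam (K i : Set X) = nndiam (U i) := nndiam_closure _
  -- The perturbation `ε'` makes all costs positive, so that they can be sorted.
  obtain ⟨e, he, hle⟩ := exists_injective_add_one_mul_le (a := fun i => g (nndiam (U i)) + ε' i)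
    (b := b) (fun i => add_pos_of_nonneg_of_pos zero_le (hε' i)) (by
      simp only [ENNReal.coe_add]
      rw [ENNReal.tsum_add]
      exact (add_le_add_right hsum.le _).trans hεb.le)
  have hbot : g (nndiam ((⊥ : Compacts X) : Set X)) = 0 := by simp [nndiam, hg0]
  let W : ℕ → Compacts X := Function.extend e K ⊥
  have hW (i : ℕ) : W (e i) = K i := he.extend_apply K ⊥ i
  have hW_bot {n : ℕ} (hn : n ∉ range e) : W n = ⊥ := Function.extend_apply' K ⊥ n hn
  refine ⟨W, fun x hx => ?_, fun n => ?_, ?_⟩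
  · obtain ⟨i, hi⟩ := mem_iUnion.1 (hEU hx)
    exact mem_iUnion.2 ⟨e i, by rw [hW]; exact subset_closure hi⟩
  · by_cases hn : n ∈ range e
    · obtain ⟨i, rfl⟩ := hn
      rw [hW, hK]
      exact (mul_le_mul_right le_self_add _).trans (hle i)
    · rw [hW_bot hn, hbot, mul_zero]
      exact zero_le
  · have hsupp : Function.support (fun n => (g (nndiam (W n : Set X)) : ℝ≥0∞)) ⊆ range e :=
      Function.support_subset_iff'.2 fun n hn => by rw [hW_bot hn, hbot, ENNReal.coe_zero]
    rw [← he.tsum_eq hsupp]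
    simp only [hW, hK]
    exact hU.le

end SortedCover

section HalfCutoff

/-- The continuous cutoff that equals `1/2` on `[0, δ/2]` and `1` on `[δ, ∞)`; multiplying a gauge
by it halves the cost of very small sets only. -/
noncomputable def halfCutoff (δ t : ℝ≥0) : ℝ≥0 := max (1 / 2) (min 1 (t / δ))

variable {δ t : ℝ≥0}

lemma continuous_halfCutoff (δ : ℝ≥0) : Continuous (halfCutoff δ) := by
  unfold halfCutoff; fun_prop

lemma halfCutoff_mono (δ : ℝ≥0) : Monotone (halfCutoff δ) := fun a b hab => by
  unfold halfCutoff; gcongr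

lemma halfCutoff_le_one (δ t : ℝ≥0) : halfCutoff δ t ≤ 1 :=
  max_le (half_le_self zero_le_one) (min_le_left _ _)

lemma half_le_halfCutoff (δ t : ℝ≥0) : (1 / 2 : ℝ≥0) ≤ halfCutoff δ t := le_max_left _ _

lemma halfCutoff_of_le (hδ : 0 < δ) (h : δ ≤ t) : halfCutoff δ t = 1 := by
  rw [halfCutoff, min_eq_left ((one_le_div hδ).2 h), max_eq_right (half_le_self zero_le_one)]

lemma halfCutoff_of_le_half (hδ : 0 < δ) (h : t ≤ δ / 2) : halfCutoff δ t = 1 / 2 := by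
  refine max_eq_left ((min_le_right _ _).trans ((div_le_iff₀ hδ).2 ?_))
  rwa [one_div_mul_eq_div]

lemma le_two_mul_mul_halfCutoff (a δ t : ℝ≥0) : a ≤ 2 * (a * halfCutoff δ t) := by
  calc a = 2 * (a * (1 / 2)) := by field_simp
    _ ≤ 2 * (a * halfCutoff δ t) := by gcongr; exact half_le_halfCutoff δ t

lemma tendsto_mul_halfCutoff {g : ℝ≥0 → ℝ≥0} (hg : Continuous g) (hg0 : g 0 = 0)
    {u d : ℕ → ℝ≥0} (hu : Tendsto u atTop (𝓝 t)) (hd : Tendsto d atTop (𝓝[>] 0)) :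
    Tendsto (fun n => g (u n) * halfCutoff (d n) (u n)) atTop (𝓝 (g t)) := by
  have hgu : Tendsto (fun n => g (u n)) atTop (𝓝 (g t)) := (hg.tendsto t).comp hu
  rcases eq_zero_or_pos t with rfl | ht
  · rw [hg0] at hgu ⊢
    exact tendsto_of_tendsto_of_tendsto_of_le_of_le tendsto_const_nhds hgu (fun _ => zero_le)
      fun n => mul_le_of_le_one_right zero_le (halfCutoff_le_one _ _)
  · have hd' := tendsto_nhdsWithin_iff.1 hd
    refine hgu.congr' ?_
    filter_upwards [hd'.1.eventually_lt_const (half_pos ht), hd'.2,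
      hu.eventually_const_lt (half_lt_self ht)] with n hn hpos hun
    rw [halfCutoff_of_le hpos (hn.trans hun).le, mul_one]

end HalfCutoff

section EssContent

variable {X : Type*} [MetricSpace X] [CompactSpace X] {k g : ℝ≥0 → ℝ≥0}

lemma hausdorffM_diff_le_of_sorted_covers (hg : Monotone g) (hgpos : ∀ t, 0 < t → 0 < g t)
    {d : ℕ → ℝ≥0} {E V : Set X} {b : ℝ≥0} {W : ℕ → ℕ → Compacts X}
    (hEW : ∀ n, E ⊆ ⋃ i, (W n i : Set X))
    (hsort : ∀ n (i : ℕ), (i + 1) * (g (nndiam (W n i : Set X)) *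
      halfCutoff (d n) (nndiam (W n i : Set X))) ≤ b)
    (hsum : ∀ n, ∑' i, ((g (nndiam (W n i : Set X)) *
      halfCutoff (d n) (nndiam (W n i : Set X)) : ℝ≥0) : ℝ≥0∞) ≤ b)
    (hWV : ∀ i, ∀ᶠ n in atTop, (W n i : Set X) ⊆ V) :
    hausdorffM (fun t => (g t : ℝ≥0∞)) (E \ V) ≤ 2 * b := by
  have hg_le (n i : ℕ) : g (nndiam (W n i : Set X)) ≤ 2 * (g (nndiam (W n i : Set X)) *
      halfCutoff (d n) (nndiam (W n i : Set X))) := le_two_mul_mul_halfCutoff _ _ _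
  refine hausdorffM_le_of_forall_exists_cover fun δ hδ => ?_
  obtain ⟨N, hN⟩ := exists_nat_gt (2 * b / g δ)
  obtain ⟨n, hn⟩ := ((Finset.eventually_all (Finset.range N)).2 fun i _ => hWV i).exists
  refine ⟨fun i => W n (i + N), fun x hx => ?_, fun i => ?_, ?_⟩
  · obtain ⟨i, hi⟩ := mem_iUnion.1 (hEW n hx.1)
    have hNi : N ≤ i := by
      by_contra! hlt
      exact hx.2 (hn i (Finset.mem_range.2 hlt) hi)
    exact mem_iUnion.2 ⟨i - N, by rwa [Nat.sub_add_cancel hNi]⟩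
  · refine (hg.reflect_lt (lt_of_mul_lt_mul_left (a := (N : ℝ≥0)) ?_ zero_le)).le
    calc (N : ℝ≥0) * g (nndiam (W n (i + N) : Set X))
        ≤ ((i + N : ℕ) + 1) * (2 * (g (nndiam (W n (i + N) : Set X)) *
          halfCutoff (d n) (nndiam (W n (i + N) : Set X)))) := by
          gcongr
          · exact_mod_cast (Nat.le_add_left N i).trans (Nat.le_succ _)
          · exact hg_le n _
      _ = 2 * (((i + N : ℕ) + 1) * (g (nndiam (W n (i + N) : Set X)) *
          halfCutoff (d n) (nndiam (W n (i + N) : Set X)))) := by ring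
      _ ≤ 2 * b := by gcongr; exact hsort n _
      _ < N * g δ := (div_lt_iff₀ (hgpos δ hδ)).1 hN
  · calc ∑' i, (g (nndiam (W n (i + N) : Set X)) : ℝ≥0∞)
        ≤ ∑' i, (g (nndiam (W n i : Set X)) : ℝ≥0∞) :=
          ENNReal.tsum_comp_le_tsum_of_injective (add_left_injective N) _
      _ ≤ ∑' i, 2 * ((g (nndiam (W n i : Set X)) *
          halfCutoff (d n) (nndiam (W n i : Set X)) : ℝ≥0) : ℝ≥0∞) :=
          ENNReal.tsum_le_tsum fun i => mod_cast hg_le n i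
      _ ≤ 2 * b := by rw [ENNReal.tsum_mul_left]; gcongr; exact hsum n

-- Along a subsequence the sorted covers converge in the Vietoris topology. The limit sets carry
-- the part of the cost that stays at positive scales, and the remainder of the cover is fine.
lemma exists_gaugeContent_le_hausdorffM_diff_le (hgc : Continuous g) (hg : Monotone g)
    (hg0 : g 0 = 0) (hgpos : ∀ t, 0 < t → 0 < g t) {d : ℕ → ℝ≥0}
    (hd : Tendsto d atTop (𝓝[>] 0)) {E : Set X} {b ε : ℝ≥0} (hε : 0 < ε)
    (hE : ∀ n, gaugeContent (fun t => g t * halfCutoff (d n) t) E < b) :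
    ∃ V : Set X, gaugeContent g V ≤ b + ε ∧
      hausdorffM (fun t => (g t : ℝ≥0∞)) (E \ V) ≤ 2 * b := by
  choose W hEW hsort hsum using fun n => exists_sorted_cover (by simp [hg0]) (hE n)
  obtain ⟨F, s, hs, hF⟩ := CompactSpace.tendsto_subseq W
  rw [tendsto_pi_nhds] at hF
  have hFsum : ∑' i, (g (nndiam (F i : Set X)) : ℝ≥0∞) ≤ b := by
    have hlim (i : ℕ) := ENNReal.tendsto_coe.2 (tendsto_mul_halfCutoff hgc hg0
      ((continuous_nndiam.tendsto (F i)).comp (hF i)) (hd.comp hs.tendsto_atTop))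
    rw [ENNReal.tsum_eq_iSup_sum]
    exact iSup_le fun T => le_of_tendsto (tendsto_finsetSum T fun i _ => hlim i)
      (Eventually.of_forall fun n => (ENNReal.sum_le_tsum T).trans (hsum (s n)))
  obtain ⟨O, hO, hFO, -, hOsum⟩ := exists_isOpen_cover hgc (fun i => (F i : Set X))
    (d := fun i => nndiam (F i : Set X) + 1) (fun i => lt_add_one _) (ENNReal.coe_pos.2 hε).ne'
  refine ⟨⋃ i, O i, (gaugeContent_le_tsum subset_rfl).trans (hOsum.trans (by gcongr)), ?_⟩
  refine hausdorffM_diff_le_of_sorted_covers hg hgpos (fun n => hEW (s n)) (fun n => hsort (s n))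
    (fun n => hsum (s n)) fun i => ?_
  filter_upwards [(hF i).eventually
    ((Compacts.isOpen_subsets_of_isOpen (hO i)).mem_nhds (hFO i))] with n hn
  exact hn.trans (subset_iUnion O i)

lemma exists_lt_essContent_mul_halfCutoff (hgc : Continuous g) (hg : Monotone g) (hg0 : g 0 = 0)
    (hgpos : ∀ t, 0 < t → 0 < g t) {a : ℝ≥0} (hkg : ∀ t, k t ≤ a * g t) {c : ℝ≥0∞}
    (hc : c < essContent X k g) {η : ℝ≥0} (hη : 0 < η) :
    ∃ δ, 0 < δ ∧ δ < η ∧ c < essContent X k fun t => g t * halfCutoff δ t := by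
  by_contra! hle
  obtain ⟨d, -, hd, hdlim⟩ := exists_seq_strictAnti_tendsto' hη
  obtain ⟨b, hcb, hb⟩ := ENNReal.lt_iff_exists_nnreal_btwn.1 hc
  obtain ⟨ε, hε, hbε⟩ := ENNReal.lt_iff_exists_add_pos_lt.1 hb
  have hlt (n : ℕ) := (hle (d n) (hd n).1 (hd n).2).trans_lt hcb
  simp only [essContent, iInf_lt_iff, exists_prop] at hlt
  choose S hS hSb using hlt
  obtain ⟨V, hVb, hV⟩ := exists_gaugeContent_le_hausdorffM_diff_le hgc hg hg0 hgpos
    (tendsto_nhdsWithin_iff.2 ⟨hdlim, Eventually.of_forall fun n => (hd n).1⟩) hε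
    (E := (⋃ n, S n)ᶜ) fun n => (measure_mono (compl_subset_compl.2 (subset_iUnion S n))).trans_lt
      (hSb n)
  have hT : CoveredByFinite (hausdorffM fun t => (k t : ℝ≥0∞)) ((⋃ n, S n) ∪ (⋃ n, S n)ᶜ \ V) :=
    (CoveredByFinite.iUnion hS).union (CoveredByFinite.of_le_mul hkg (.of_lt_top
      (hV.trans_lt (ENNReal.mul_lt_top ENNReal.ofNat_lt_top ENNReal.coe_lt_top))))
  refine hbε.not_ge ((essContent_le hT).trans ((measure_mono ?_).trans hVb))
  intro x hx
  by_contra hxV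
  exact hx (or_iff_not_imp_left.2 fun hxS => ⟨hxS, hxV⟩)

end EssContent

section Damping

/-- `φ` is a damping factor of level `n` with threshold `a`: it is a doubling function which has
the constant value `2⁻ⁿ` up to `a`. Multiplying by `halfCutoff δ` with `δ` small compared to `a`
raises the level. -/
structure IsDamping (n : ℕ) (φ : ℝ≥0 → ℝ≥0) (a : ℝ≥0) : Prop where
  continuous : Continuous φ
  mono : Monotone φ
  three_mul_le : ∀ t, φ (3 * t) ≤ 2 * φ t
  pos : 0 < a
  le_pow : a ≤ (1 / 2) ^ n
  eq_pow : ∀ t ≤ a, φ t = (1 / 2) ^ n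

namespace IsDamping

variable {n : ℕ} {φ : ℝ≥0 → ℝ≥0} {a δ : ℝ≥0}

lemma one : IsDamping 0 1 1 where
  continuous := continuous_one
  mono := monotone_const
  three_mul_le _ := by simp
  pos := one_pos
  le_pow := by simp
  eq_pow := by simp

lemma pow_le (hφ : IsDamping n φ a) (t : ℝ≥0) : (1 / 2) ^ n ≤ φ t := by
  rw [← hφ.eq_pow 0 zero_le]
  exact hφ.mono zero_le

lemma mul_halfCutoff (hφ : IsDamping n φ a) (hδ : 0 < δ) (hδa : δ < a / 3) :
    IsDamping (n + 1) (fun t => φ t * halfCutoff δ t) (δ / 2) where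
  continuous := hφ.continuous.mul (continuous_halfCutoff δ)
  mono := hφ.mono.mul' (halfCutoff_mono δ)
  three_mul_le t := by
    rcases le_total δ t with h | h
    · rw [halfCutoff_of_le hδ h, mul_one]
      exact (mul_le_of_le_one_right zero_le (halfCutoff_le_one _ _)).trans (hφ.three_mul_le t)
    · have h3t : 3 * t ≤ a := by
        calc 3 * t ≤ 3 * (a / 3) := by gcongr; exact h.trans hδa.le
          _ = a := by field_simp
      have ht : φ (3 * t) = φ t := by
        rw [hφ.eq_pow _ h3t, hφ.eq_pow _ ((le_mul_of_one_le_left zero_le (by norm_num)).trans h3t)]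
      rw [ht]
      exact (mul_le_of_le_one_right zero_le (halfCutoff_le_one _ _)).trans
        (le_two_mul_mul_halfCutoff _ _ _)
  pos := half_pos hδ
  le_pow := by
    rw [pow_succ, ← div_eq_mul_one_div]
    gcongr
    exact (hδa.le.trans (div_le_self zero_le (by norm_num))).trans hφ.le_pow
  eq_pow t ht := by
    have hta : t ≤ a := (ht.trans (half_le_self zero_le)).trans
      (hδa.le.trans (div_le_self zero_le (by norm_num)))
    rw [halfCutoff_of_le_half hδ ht, hφ.eq_pow t hta, pow_succ]

end IsDamping

/-- A sequence of damping factors, each of which modifies its predecessor only below the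
threshold of the latter. -/
structure IsDampingSeq (φ : ℕ → ℝ≥0 → ℝ≥0) (a : ℕ → ℝ≥0) : Prop where
  isDamping : ∀ n, IsDamping n (φ n) (a n)
  succ_le : ∀ n t, φ (n + 1) t ≤ φ n t
  succ_eq : ∀ n t, a n ≤ t → φ (n + 1) t = φ n t
  antitone : Antitone a

namespace IsDampingSeq

variable {φ : ℕ → ℝ≥0 → ℝ≥0} {a : ℕ → ℝ≥0} {n : ℕ} {t : ℝ≥0}

lemma iInf_le (φ : ℕ → ℝ≥0 → ℝ≥0) (n : ℕ) (t : ℝ≥0) : ⨅ m, φ m t ≤ φ n t :=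
  ciInf_le (OrderBot.bddBelow _) n

lemma eq_iInf (h : IsDampingSeq φ a) (ht : a n ≤ t) : φ n t = ⨅ m, φ m t := by
  have hanti : Antitone fun m => φ m t := antitone_nat_of_succ_le fun m => h.succ_le m t
  have hconst (m : ℕ) (hm : n ≤ m) : φ m t = φ n t := by
    induction m, hm using Nat.le_induction with
    | base => rfl
    | succ m hm ih => rw [h.succ_eq m t ((h.antitone hm).trans ht), ih]
  refine le_antisymm (le_ciInf fun m => ?_) (iInf_le φ n t)
  rcases le_total n m with hm | hm
  · rw [hconst m hm]
  · exact hanti hm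

lemma eventually_eq_iInf (h : IsDampingSeq φ a) (ht : 0 < t) :
    ∀ᶠ n in atTop, ∀ s, t ≤ s → φ n s = ⨅ m, φ m s := by
  obtain ⟨N, hN⟩ := NNReal.exists_pow_lt_of_lt_one ht (show (1 / 2 : ℝ≥0) < 1 by norm_num)
  filter_upwards [eventually_ge_atTop N] with n hn s hs
  exact h.eq_iInf ((h.antitone hn).trans (((h.isDamping N).le_pow.trans hN.le).trans hs))

lemma mono_iInf (h : IsDampingSeq φ a) : Monotone fun t => ⨅ n, φ n t :=
  fun _ _ hst => ciInf_mono (OrderBot.bddBelow _) fun n => (h.isDamping n).mono hst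

lemma iInf_three_mul_le (h : IsDampingSeq φ a) (t : ℝ≥0) :
    ⨅ n, φ n (3 * t) ≤ 2 * ⨅ n, φ n t := by
  rcases eq_zero_or_pos t with rfl | ht
  · rw [mul_zero]
    exact le_mul_of_one_le_left zero_le (by norm_num)
  · obtain ⟨n, hn⟩ := (h.eventually_eq_iInf ht).exists
    rw [← hn t le_rfl]
    exact (iInf_le φ n _).trans ((h.isDamping n).three_mul_le t)

lemma tendsto_iInf (h : IsDampingSeq φ a) : Tendsto (fun t => ⨅ n, φ n t) (𝓝 0) (𝓝 0) := by
  refine tendsto_order.2 ⟨fun _ hb => absurd hb not_lt_zero, fun ε hε => ?_⟩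
  obtain ⟨N, hN⟩ := NNReal.exists_pow_lt_of_lt_one hε (show (1 / 2 : ℝ≥0) < 1 by norm_num)
  filter_upwards [Iio_mem_nhds (h.isDamping N).pos] with t ht
  refine (iInf_le φ N t).trans_lt ?_
  rwa [(h.isDamping N).eq_pow t (mem_Iio.1 ht).le]

lemma continuous_iInf_mul (h : IsDampingSeq φ a) {k : ℝ≥0 → ℝ≥0} (hkc : Continuous k)
    (hk0 : k 0 = 0) : Continuous fun t => (⨅ n, φ n t) * k t := by
  refine continuous_iff_continuousAt.2 fun t => ?_
  rcases eq_zero_or_pos t with rfl | ht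
  · simpa only [ContinuousAt, hk0, mul_zero] using h.tendsto_iInf.mul (hkc.tendsto 0)
  · obtain ⟨n, hn⟩ := (h.eventually_eq_iInf (half_pos ht)).exists
    refine ((h.isDamping n).continuous.mul hkc).continuousAt.congr ?_
    filter_upwards [lt_mem_nhds (half_lt_self ht)] with s hs
    rw [Pi.mul_apply, hn s hs.le]

end IsDampingSeq

variable {X : Type*} [MetricSpace X] [CompactSpace X] {k : ℝ≥0 → ℝ≥0}

lemma exists_isDampingSeq (hkc : Continuous k) (hk : Monotone k) (hk0 : k 0 = 0)
    (hkpos : ∀ t, 0 < t → 0 < k t) {c : ℝ≥0∞} (hc : c < essContent X k k) :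
    ∃ φ a, IsDampingSeq φ a ∧ ∀ n, c < essContent X k fun t => φ n t * k t := by
  let Q (n : ℕ) : Type := {p : (ℝ≥0 → ℝ≥0) × ℝ≥0 //
    IsDamping n p.1 p.2 ∧ c < essContent X k fun t => p.1 t * k t}
  have step (n : ℕ) (p : Q n) : ∃ q : Q (n + 1), (∀ t, q.1.1 t ≤ p.1.1 t) ∧
      (∀ t, p.1.2 ≤ t → q.1.1 t = p.1.1 t) ∧ q.1.2 ≤ p.1.2 := by
    obtain ⟨⟨φ, a⟩, hφ, hcφ⟩ := p
    have hkφ (t : ℝ≥0) : k t ≤ 2 ^ n * (φ t * k t) := by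
      calc k t = 2 ^ n * ((1 / 2) ^ n * k t) := by rw [← mul_assoc, ← mul_pow]; simp
        _ ≤ 2 ^ n * (φ t * k t) := by gcongr; exact hφ.pow_le t
    obtain ⟨δ, hδ, hδa, hcδ⟩ := exists_lt_essContent_mul_halfCutoff (hφ.continuous.mul hkc)
      (hφ.mono.mul' hk) (by simp [hk0])
      (fun t ht => mul_pos ((pow_pos (by norm_num) n).trans_le (hφ.pow_le t)) (hkpos t ht)) hkφ hcφ
      (div_pos hφ.pos three_pos)
    have hδa' : δ ≤ a := hδa.le.trans (div_le_self zero_le (by norm_num))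
    refine ⟨⟨(fun t => φ t * halfCutoff δ t, δ / 2), hφ.mul_halfCutoff hδ hδa, ?_⟩,
      fun t => mul_le_of_le_one_right zero_le (halfCutoff_le_one _ _),
      fun t ht => ?_, (half_le_self zero_le).trans hδa'⟩
    · simpa only [Pi.mul_apply, mul_right_comm] using hcδ
    · change φ t * halfCutoff δ t = φ t
      rw [halfCutoff_of_le hδ (hδa'.trans ht), mul_one]
  choose next hle heq hanti using step
  let f (n : ℕ) : Q n := Nat.rec ⟨(1, 1), .one, by simpa using hc⟩ next n
  exact ⟨fun n => (f n).1.1, fun n => (f n).1.2, ⟨fun n => (f n).2.1, fun n => hle n (f n),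
    fun n => heq n (f n), antitone_nat_of_succ_le fun n => hanti n (f n)⟩, fun n => (f n).2.2⟩

lemma IsDampingSeq.le_gaugeContent_univ {φ : ℕ → ℝ≥0 → ℝ≥0} {a : ℕ → ℝ≥0} (h : IsDampingSeq φ a)
    (hkc : Continuous k) (hk0 : k 0 = 0) {c : ℝ≥0∞}
    (hc : ∀ n, c ≤ gaugeContent (fun t => φ n t * k t) (univ : Set X)) :
    c ≤ gaugeContent (fun t => (⨅ n, φ n t) * k t) (univ : Set X) := by
  by_contra! hlt
  obtain ⟨O, hO, hOuniv, hOc⟩ := exists_isOpen_cover_of_gaugeContent_lt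
    (h.continuous_iInf_mul hkc hk0) (by simp [hk0]) hlt
  obtain ⟨T, hT⟩ := isCompact_univ.elim_finite_subcover O hO hOuniv
  have hstab (t : ℝ≥0) : ∀ᶠ n in atTop, φ n t * k t = (⨅ m, φ m t) * k t := by
    rcases eq_zero_or_pos t with rfl | ht
    · simp [hk0]
    · filter_upwards [h.eventually_eq_iInf ht] with n hn
      rw [hn t le_rfl]
  obtain ⟨n, hn⟩ := ((Finset.eventually_all T).2 fun i _ => hstab (nndiam (O i))).exists
  refine (hc n).not_gt (lt_of_le_of_lt ?_ hOc)
  have hT' : univ ⊆ ⋃ i : T, O i :=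
    hT.trans (iUnion₂_subset fun i hi => subset_iUnion_of_subset ⟨i, hi⟩ subset_rfl)
  calc gaugeContent (fun t => φ n t * k t) univ
      ≤ ∑' i : T, ((φ n (nndiam (O i)) * k (nndiam (O i)) : ℝ≥0) : ℝ≥0∞) :=
        gaugeContent_le_tsum hT'
    _ = ∑' i : T, (((⨅ m, φ m (nndiam (O i))) * k (nndiam (O i)) : ℝ≥0) : ℝ≥0∞) :=
        tsum_congr fun i => by rw [hn i i.2]
    _ ≤ _ := ENNReal.tsum_comp_le_tsum_of_injective Subtype.val_injective _

lemma exists_damping_gaugeContent_pos (hkc : Continuous k) (hk : Monotone k) (hk0 : k 0 = 0)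
    (hkpos : ∀ t, 0 < t → 0 < k t)
    (hX : ¬CoveredByFinite (hausdorffM fun t => (k t : ℝ≥0∞)) (univ : Set X)) :
    ∃ φ : ℝ≥0 → ℝ≥0, Monotone φ ∧ (∀ t, φ (3 * t) ≤ 2 * φ t) ∧ Tendsto φ (𝓝 0) (𝓝 0) ∧
      0 < gaugeContent (fun t => φ t * k t) (univ : Set X) := by
  obtain ⟨c, hc0, hc⟩ := exists_between (essContent_pos hk hk0 hkpos hX)
  obtain ⟨φ, a, h, hφ⟩ := exists_isDampingSeq hkc hk hk0 hkpos hc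
  exact ⟨_, h.mono_iInf, h.iInf_three_mul_le, h.tendsto_iInf, hc0.trans_le
    (h.le_gaugeContent_univ hkc hk0 fun n => (hφ n).le.trans essContent_le_gaugeContent_univ)⟩

end Damping

section Duality

variable {ι α : Type*}

lemma exists_pairwiseDisjoint_greedy {β : Type*} [LinearOrder β] (B : ι → Set α) (d : ι → β)
    (s : Finset ι) (hB : ∀ i ∈ s, (B i).Nonempty) :
    ∃ u ⊆ s, (u : Set ι).PairwiseDisjoint B ∧
      ∀ i ∈ s, ∃ j ∈ u, (B i ∩ B j).Nonempty ∧ d i ≤ d j := by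
  classical
  induction s using Finset.strongInduction with
  | H s ih =>
    rcases s.eq_empty_or_nonempty with rfl | hs
    · exact ⟨∅, by simp⟩
    obtain ⟨m, hm, hmax⟩ := s.exists_max_image d hs
    have hlt : s.filter (fun i => Disjoint (B i) (B m)) ⊂ s := Finset.filter_ssubset.2
      ⟨m, hm, by simpa only [disjoint_self, bot_eq_empty] using (hB m hm).ne_empty⟩
    obtain ⟨u, hu, hdisj, hcov⟩ := ih _ hlt fun i hi => hB i (Finset.mem_filter.1 hi).1
    refine ⟨insert m u, Finset.insert_subset hm (hu.trans hlt.subset), ?_, fun i hi => ?_⟩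
    · rw [Finset.coe_insert, pairwiseDisjoint_insert]
      exact ⟨hdisj, fun j hj _ => (Finset.mem_filter.1 (hu hj)).2.symm⟩
    · by_cases him : Disjoint (B i) (B m)
      · obtain ⟨j, hj, h⟩ := hcov i (Finset.mem_filter.2 ⟨hi, him⟩)
        exact ⟨j, Finset.mem_insert_of_mem hj, h⟩
      · exact ⟨m, Finset.mem_insert_self _ _, not_disjoint_iff_nonempty_inter.1 him, hmax i hi⟩

lemma sum_mul_eq_sum_erase_add [DecidableEq ι] {s u : Finset ι} (hus : u ⊆ s) {m : ι} (hm : m ∈ u)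
    {w : ι → ℝ≥0} (hmin : ∀ i ∈ u, w m ≤ w i) (F : ι → ℝ≥0) :
    ∑ i ∈ s, w i * F i =
      ∑ i ∈ s.erase m, (if i ∈ u then w i - w m else w i) * F i + w m * ∑ i ∈ u, F i := by
  rw [Finset.sum_erase _ (by simp [hm]), Finset.mul_sum,
    ← Finset.inter_eq_right.2 hus, ← Finset.sum_ite_mem, ← Finset.sum_add_distrib]
  refine Finset.sum_congr rfl fun i hi => ?_
  by_cases hiu : i ∈ u
  · simp only [Finset.mem_inter, hi, hiu, and_self, if_true, ← add_mul,
      tsub_add_cancel_of_le (hmin i hiu)]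
  · simp only [Finset.mem_inter, hiu, and_false, if_false, add_zero]

lemma mul_le_sum_of_disjoint_subcovers {B : ι → Set α} {τ : ι → ℝ≥0} {c : ℝ≥0}
    (hc : ∀ s : Finset ι, univ ⊆ ⋃ i ∈ s, B i →
      ∃ u ⊆ s, (u : Set ι).PairwiseDisjoint B ∧ c ≤ ∑ i ∈ u, τ i)
    (s : Finset ι) (w : ι → ℝ≥0) (b : ℝ≥0)
    (hb : ∀ x, b ≤ ∑ i ∈ s, w i * (B i).indicator 1 x) : b * c ≤ ∑ i ∈ s, w i * τ i := by
  classical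
  induction s using Finset.strongInduction generalizing w b with
  | H s ih =>
    rcases eq_or_ne b 0 with rfl | hb0
    · simp
    have hcov : univ ⊆ ⋃ i ∈ s.filter (w · ≠ 0), B i := fun x _ => by
      obtain ⟨i, hi, hne⟩ := Finset.exists_ne_zero_of_sum_ne_zero
        ((pos_iff_ne_zero.2 hb0).trans_le (hb x)).ne'
      exact mem_biUnion (Finset.mem_coe.2 (Finset.mem_filter.2 ⟨hi, left_ne_zero_of_mul hne⟩))
        (mem_of_indicator_ne_zero (right_ne_zero_of_mul hne))
    obtain ⟨u, hu, hdisj, hcu⟩ := hc _ hcov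
    rcases u.eq_empty_or_nonempty with rfl | hune
    · rw [le_zero_iff.1 hcu, mul_zero]
      exact zero_le
    obtain ⟨m, hm, hmin⟩ := u.exists_min_image w hune
    have hus : u ⊆ s := hu.trans (Finset.filter_subset _ _)
    -- Subtracting the least weight `w m` along the disjoint subcover `u` removes `m` from the
    -- cover and lowers the multiplicity by at most `w m`.
    let w' (i : ι) : ℝ≥0 := if i ∈ u then w i - w m else w i
    have hsplit (F : ι → ℝ≥0) := sum_mul_eq_sum_erase_add hus hm hmin F
    have hmult (x : α) : ∑ i ∈ u, (B i).indicator (1 : α → ℝ≥0) x ≤ 1 := by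
      rw [← Finset.indicator_biUnion_apply _ _ hdisj]
      exact indicator_le_self _ _ x
    have key := ih (s.erase m) (Finset.erase_ssubset (hus hm)) w' (b - w m) fun x => by
      rw [tsub_le_iff_right]
      refine ((hb x).trans_eq (hsplit _)).trans ?_
      gcongr
      exact mul_le_of_le_one_right zero_le (hmult x)
    calc b * c ≤ (b - w m) * c + w m * c := by rw [← add_mul]; gcongr; exact le_tsub_add
      _ ≤ _ := by rw [hsplit]; gcongr

end Duality

section FractionalCover

variable {X : Type*} [TopologicalSpace X] {τ : Opens X → ℝ≥0}

/-- The weighted multiplicity function of a finitely supported weight on the open sets. -/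
noncomputable def coverMultiplicity : (Opens X →₀ ℝ≥0) →ₗ[ℝ≥0] X → ℝ≥0 :=
  Finsupp.linearCombination ℝ≥0 fun U => (U : Set X).indicator 1

/-- The least `τ`-cost of a fractional cover whose multiplicity dominates the function `f`. -/
noncomputable def fractionalCost (τ : Opens X → ℝ≥0) (f : C(X, ℝ)) : ℝ :=
  sInf {r | ∃ w, (∀ x, f x ≤ coverMultiplicity w x) ∧ (Finsupp.linearCombination ℝ≥0 τ w : ℝ) = r}

lemma fractionalCost_le {f : C(X, ℝ)} {w : Opens X →₀ ℝ≥0} (hw : ∀ x, f x ≤ coverMultiplicity w x) :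
    fractionalCost τ f ≤ Finsupp.linearCombination ℝ≥0 τ w :=
  csInf_le ⟨0, by rintro _ ⟨w, -, rfl⟩; exact NNReal.coe_nonneg _⟩ ⟨w, hw, rfl⟩

variable [CompactSpace X]

lemma le_fractionalCost {f : C(X, ℝ)} {r : ℝ} (h : ∀ w, (∀ x, f x ≤ coverMultiplicity w x) →
    r ≤ Finsupp.linearCombination ℝ≥0 τ w) : r ≤ fractionalCost τ f := by
  refine le_csInf ⟨_, Finsupp.single ⊤ ‖f‖₊, fun x => ?_, rfl⟩
    (by rintro _ ⟨w, hw, rfl⟩; exact h w hw)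
  simpa [coverMultiplicity] using (le_abs_self _).trans (f.norm_coe_le_norm x)

lemma fractionalCost_add_le (f g : C(X, ℝ)) :
    fractionalCost τ (f + g) ≤ fractionalCost τ f + fractionalCost τ g := by
  rw [← sub_le_iff_le_add]
  refine le_fractionalCost fun w hw => ?_
  rw [sub_le_comm]
  refine le_fractionalCost fun w' hw' => ?_
  rw [sub_le_iff_le_add', ← NNReal.coe_add, ← map_add]
  exact fractionalCost_le fun x => by simpa using add_le_add (hw x) (hw' x)

lemma fractionalCost_smul {a : ℝ} (ha : 0 < a) (f : C(X, ℝ)) :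
    fractionalCost τ (a • f) = a * fractionalCost τ f := by
  have hle {a : ℝ} (ha : 0 < a) (f : C(X, ℝ)) :
      fractionalCost τ (a • f) ≤ a * fractionalCost τ f := by
    lift a to ℝ≥0 using ha.le
    rw [← div_le_iff₀' ha]
    refine le_fractionalCost fun w hw => ?_
    rw [div_le_iff₀' ha, ← NNReal.coe_mul, ← smul_eq_mul, ← map_smul]
    exact fractionalCost_le fun x => by simpa using mul_le_mul_of_nonneg_left (hw x) a.2
  refine (hle ha f).antisymm ?_
  rw [← le_inv_mul_iff₀ ha]
  simpa [smul_smul, ha.ne'] using hle (inv_pos.2 ha) (a • f)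

lemma exists_linear_functional_of_fractionalCover [Nonempty X] {c : ℝ≥0}
    (hc : ∀ (w : Opens X →₀ ℝ≥0) (b : ℝ≥0), (∀ x, b ≤ coverMultiplicity w x) →
      b * c ≤ Finsupp.linearCombination ℝ≥0 τ w) :
    ∃ ℓ : C(X, ℝ) →ₗ[ℝ] ℝ, ℓ 1 = c ∧ ∀ f, ℓ f ≤ fractionalCost τ f := by
  let ℓ₀ : C(X, ℝ) →ₗ.[ℝ] ℝ := LinearPMap.mkSpanSingleton 1 (c : ℝ) one_ne_zero
  have hℓ₀ (f : ℓ₀.domain) : ℓ₀ f ≤ fractionalCost τ f := by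
    obtain ⟨f, hf⟩ := f
    obtain ⟨b, rfl⟩ := Submodule.mem_span_singleton.1 hf
    refine (LinearPMap.mkSpanSingleton'_apply _ _ _ _ _).trans_le (le_fractionalCost fun w hw => ?_)
    calc b * (c : ℝ) ≤ (b.toNNReal * c : ℝ≥0) := by push_cast; gcongr; exact Real.le_coe_toNNReal b
      _ ≤ _ := NNReal.coe_le_coe.2 (hc w _ fun x => Real.toNNReal_le_iff_le_coe.2 (by
        simpa using hw x))
  obtain ⟨ℓ, hℓ, hle⟩ := exists_extension_of_le_sublinear ℓ₀ (fractionalCost τ)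
    (fun _ => fractionalCost_smul) fractionalCost_add_le hℓ₀
  exact ⟨ℓ, (hℓ ⟨1, Submodule.mem_span_singleton_self _⟩).trans
    (LinearPMap.mkSpanSingleton'_apply_self _ _ _ _), hle⟩

lemma exists_measure_le_of_fractionalCover [T2Space X] [Nonempty X] [MeasurableSpace X]
    [BorelSpace X] {c : ℝ≥0}
    (hc : ∀ (w : Opens X →₀ ℝ≥0) (b : ℝ≥0), (∀ x, b ≤ coverMultiplicity w x) →
      b * c ≤ Finsupp.linearCombination ℝ≥0 τ w) :
    ∃ μ : Measure X, μ univ = c ∧ ∀ U : Opens X, μ U ≤ τ U := by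
  obtain ⟨ℓ, hℓ1, hℓ⟩ := exists_linear_functional_of_fractionalCover hc
  have hℓpos (f : C(X, ℝ)) (hf : 0 ≤ f) : 0 ≤ ℓ f := by
    have := (hℓ (-f)).trans (fractionalCost_le (w := 0) fun x => by simpa using hf x)
    simpa using this
  let Λ : CompactlySupportedContinuousMap X ℝ →ₚ[ℝ] ℝ := PositiveLinearMap.mk₀
    { toFun := fun f => ℓ f.toContinuousMap
      map_add' := fun f g => ℓ.map_add f.toContinuousMap g.toContinuousMap
      map_smul' := fun a f => ℓ.map_smul a f.toContinuousMap }
    fun f hf => hℓpos f.toContinuousMap hf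
  have hμ (U : Opens X) : RealRMK.rieszMeasure Λ U ≤ τ U := by
    rw [U.isOpen.measure_eq_iSup_isCompact]
    refine iSup₂_le fun K hKU => iSup_le fun hK => ?_
    obtain ⟨f, hf0, hf1, hf⟩ := exists_continuous_zero_one_of_isClosed U.isOpen.isClosed_compl
      hK.isClosed (disjoint_compl_left_iff_subset.2 hKU)
    refine (RealRMK.rieszMeasure_le_of_eq_one Λ
      (f := CompactlySupportedContinuousMap.continuousMapEquiv f)
      (fun x => (hf x).1) hK hf1).trans ?_
    rw [← ENNReal.ofReal_coe_nnreal]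
    refine ENNReal.ofReal_le_ofReal ((hℓ f).trans
      ((fractionalCost_le (w := Finsupp.single U 1) fun x => ?_).trans_eq (by simp)))
    by_cases hx : x ∈ U
    · simpa [coverMultiplicity, hx] using (hf x).2
    · simpa [coverMultiplicity, hx] using (hf0 hx).le
  have : IsFiniteMeasure (RealRMK.rieszMeasure Λ) := ⟨(hμ ⊤).trans_lt ENNReal.coe_lt_top⟩
  refine ⟨RealRMK.rieszMeasure Λ, ?_, hμ⟩
  have h1 := RealRMK.integral_rieszMeasure Λ (CompactlySupportedContinuousMap.continuousMapEquiv 1)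
  have h2 : (RealRMK.rieszMeasure Λ).real univ = c := by
    simpa using h1.trans hℓ1
  rw [← ofReal_measureReal, h2, ENNReal.ofReal_coe_nnreal]

end FractionalCover

section VitaliHull

variable {X : Type*} [MetricSpace X] {k φ : ℝ≥0 → ℝ≥0} {U : Set X} {C : ℝ≥0}

/-- The union of all sets which meet `U` and whose diameter is at most that of `U`; it plays the
role of the enlarged ball in the Vitali covering argument. -/
def vitaliHull (U : Set X) : Set X := ⋃₀ {V | (V ∩ U).Nonempty ∧ nndiam V ≤ nndiam U}

/-- The gauge `k` satisfies the covering property needed in Frostman's lemma: every Vitali hull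
splits into boundedly many sets whose `k`-size is controlled by that of the original set. -/
def HasVitaliCovers (X : Type*) [MetricSpace X] (k : ℝ≥0 → ℝ≥0) : Prop :=
  ∃ (n : ℕ) (C : ℝ≥0), ∀ U : Set X, ∃ T : Finset (Set X), T.card ≤ n ∧ vitaliHull U ⊆ ⋃ W ∈ T, W ∧
    ∀ W ∈ T, nndiam W ≤ 3 * nndiam U ∧ k (nndiam W) ≤ C * k (nndiam U)

lemma HasVitaliCovers.exists_gaugeContent_vitaliHull_le (hk : HasVitaliCovers X k)
    (hφ : Monotone φ) (hφ3 : ∀ t, φ (3 * t) ≤ 2 * φ t) :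
    ∃ C : ℝ≥0, ∀ U : Set X,
      gaugeContent (fun t => φ t * k t) (vitaliHull U) ≤
        C * (φ (nndiam U) * k (nndiam U) : ℝ≥0) := by
  obtain ⟨n, C, hk⟩ := hk
  refine ⟨n * (2 * C), fun U => ?_⟩
  obtain ⟨T, hTn, hUT, hT⟩ := hk U
  have hW (W) (hW : W ∈ T) :
      φ (nndiam W) * k (nndiam W) ≤ 2 * C * (φ (nndiam U) * k (nndiam U)) := by
    calc φ (nndiam W) * k (nndiam W) ≤ 2 * φ (nndiam U) * (C * k (nndiam U)) := by
          gcongr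
          exacts [(hφ (hT W hW).1).trans (hφ3 _), (hT W hW).2]
      _ = _ := by ring
  calc gaugeContent (fun t => φ t * k t) (vitaliHull U)
      ≤ ∑ W ∈ T, gaugeContent (fun t => φ t * k t) W :=
        (measure_mono hUT).trans (measure_biUnion_finset_le T _)
    _ ≤ ∑ W ∈ T, ((2 * C * (φ (nndiam U) * k (nndiam U)) : ℝ≥0) : ℝ≥0∞) :=
        Finset.sum_le_sum fun W hWT =>
          (gaugeContent_le W).trans (ENNReal.coe_le_coe.2 (hW W hWT))
    _ ≤ n * ((2 * C * (φ (nndiam U) * k (nndiam U)) : ℝ≥0) : ℝ≥0∞) := by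
        rw [Finset.sum_const, nsmul_eq_mul]
        gcongr
    _ = _ := by push_cast; ring

variable [CompactSpace X]

lemma exists_nndist_le_of_mem_vitaliHull {y : X} (hy : y ∈ vitaliHull U) :
    ∃ x ∈ U, nndist y x ≤ nndiam U := by
  obtain ⟨V, ⟨⟨x, hxV, hxU⟩, hV⟩, hyV⟩ := hy
  exact ⟨x, hxU, (nndist_le_nndiam hyV hxV).trans hV⟩

lemma nndiam_vitaliHull_le (U : Set X) : nndiam (vitaliHull U) ≤ 3 * nndiam U := by
  refine nndiam_le_iff.2 fun y hy z hz => ?_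
  obtain ⟨x, hx, hyx⟩ := exists_nndist_le_of_mem_vitaliHull hy
  obtain ⟨x', hx', hzx'⟩ := exists_nndist_le_of_mem_vitaliHull hz
  calc nndist y z ≤ nndist y x + nndist x x' + nndist x' z :=
        (nndist_triangle _ x' _).trans (by gcongr; exact nndist_triangle _ _ _)
    _ ≤ nndiam U + nndiam U + nndiam U := by
        gcongr
        exacts [nndist_le_nndiam hx hx', nndist_comm x' z ▸ hzx']
    _ = 3 * nndiam U := by ring

lemma nndiam_vitaliHull_le_of_ultrametric
    (hX : ∀ x y z : X, dist x z ≤ max (dist x y) (dist y z)) (U : Set X) :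
    nndiam (vitaliHull U) ≤ nndiam U := by
  refine nndiam_le_iff.2 fun y hy z hz => ?_
  obtain ⟨x, hx, hyx⟩ := exists_nndist_le_of_mem_vitaliHull hy
  obtain ⟨x', hx', hzx'⟩ := exists_nndist_le_of_mem_vitaliHull hz
  exact (hX y x' z).trans (max_le ((hX y x x').trans (max_le hyx (nndist_le_nndiam hx hx')))
    (dist_comm x' z ▸ hzx'))

lemma hasVitaliCovers_of_nndiam_le
    (hU : ∀ U : Set X, k (nndiam (vitaliHull U)) ≤ C * k (nndiam U)) :
    HasVitaliCovers X k :=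
  ⟨1, C, fun U => ⟨{vitaliHull U}, by simp, by simp, by simpa using ⟨nndiam_vitaliHull_le U, hU U⟩⟩⟩

lemma hasVitaliCovers_of_three_mul_le (hk : Monotone k) (hk3 : ∀ t, k (3 * t) ≤ C * k t) :
    HasVitaliCovers X k :=
  hasVitaliCovers_of_nndiam_le fun U => (hk (nndiam_vitaliHull_le U)).trans (hk3 _)

lemma hasVitaliCovers_of_ultrametric (hk : Monotone k)
    (hX : ∀ x y z : X, dist x z ≤ max (dist x y) (dist y z)) : HasVitaliCovers X k :=
  hasVitaliCovers_of_nndiam_le (C := 1) fun U => by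
    simpa using hk (nndiam_vitaliHull_le_of_ultrametric hX U)

lemma FiniteStructuralDim.of_isometry {X Z : Type*} [MetricSpace X] [MetricSpace Z] {f : X → Z}
    (hZ : FiniteStructuralDim Z) (hf : Isometry f) : FiniteStructuralDim X := fun ξ hξ => by
  obtain ⟨N, δ₀, hδ₀, hN⟩ := hZ ξ hξ
  refine ⟨N, δ₀, hδ₀, fun s hs => ?_⟩
  obtain ⟨U, hsU, hU⟩ := hN (f '' s) ((hf.ediam_image s).trans_le hs)
  refine ⟨fun i => f ⁻¹' U i, by rwa [← preimage_iUnion, ← image_subset_iff], fun i => ?_⟩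
  calc Metric.ediam (f ⁻¹' U i) = Metric.ediam (f '' (f ⁻¹' U i)) := (hf.ediam_image _).symm
    _ ≤ Metric.ediam (U i) := Metric.ediam_mono (image_preimage_subset _ _)
    _ ≤ ξ * Metric.ediam (f '' s) := hU i
    _ = ξ * Metric.ediam s := by rw [hf.ediam_image]

lemma FiniteStructuralDim.exists_cover (hX : FiniteStructuralDim X) {ξ : ℝ≥0} (hξ : 0 < ξ) :
    ∃ n : ℕ, ∀ s : Set X, ∃ T : Finset (Set X), T.card ≤ n ∧ s ⊆ ⋃ W ∈ T, W ∧
      ∀ W ∈ T, nndiam W ≤ ξ * nndiam s := by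
  classical
  obtain ⟨N, δ₀, hδ₀, hN⟩ := hX ξ hξ
  obtain ⟨F, -, hF, hFX⟩ := (isCompact_univ (X := X)).finite_cover_balls
    (e := ((ξ * δ₀ / 2 : ℝ≥0) : ℝ)) (by positivity)
  let T₀ : Finset (Set X) := hF.toFinset.image fun x => Metric.ball x (ξ * δ₀ / 2 : ℝ≥0)
  refine ⟨max N T₀.card, fun s => ?_⟩
  rcases le_total (nndiam s) δ₀ with hs | hs
  · obtain ⟨U, hsU, hU⟩ := hN s ((coe_nndiam s).symm.trans_le (ENNReal.coe_le_coe.2 hs))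
    refine ⟨Finset.univ.image U, ?_, by simpa using hsU, ?_⟩
    · exact (Finset.card_image_le.trans_eq (Finset.card_fin N)).trans (le_max_left _ _)
    · simp only [Finset.mem_image, Finset.mem_univ, true_and, forall_exists_index,
        forall_apply_eq_imp_iff]
      intro i
      rw [← ENNReal.coe_le_coe, ENNReal.coe_mul, coe_nndiam, coe_nndiam]
      exact hU i
  · refine ⟨T₀, le_max_right _ _, (subset_univ s).trans (by simpa [T₀] using hFX), ?_⟩
    simp only [T₀, Finset.mem_image, forall_exists_index, and_imp, forall_apply_eq_imp_iff₂]
    intro x _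
    rw [← ENNReal.coe_le_coe, coe_nndiam, ← Metric.eball_coe]
    refine Metric.ediam_eball_le.trans ?_
    rw [← ENNReal.coe_ofNat, ← ENNReal.coe_mul, ENNReal.coe_le_coe, mul_div_cancel₀ _ two_ne_zero]
    gcongr

lemma hasVitaliCovers_of_finiteStructuralDim (hk : Monotone k) (hX : FiniteStructuralDim X) :
    HasVitaliCovers X k := by
  obtain ⟨n, hn⟩ := hX.exists_cover (ξ := 1 / 3) (by positivity)
  refine ⟨n, 1, fun U => ?_⟩
  obtain ⟨T, hTn, hUT, hT⟩ := hn (vitaliHull U)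
  refine ⟨T, hTn, hUT, fun W hW => ?_⟩
  have hWU : nndiam W ≤ nndiam U := by
    calc nndiam W ≤ 1 / 3 * (3 * nndiam U) :=
          (hT W hW).trans (by gcongr; exact nndiam_vitaliHull_le U)
      _ = nndiam U := by rw [← mul_assoc]; norm_num
  exact ⟨hWU.trans (le_mul_of_one_le_left zero_le (by norm_num)), by simpa using hk hWU⟩

end VitaliHull

section Frostman

variable {X : Type*} [MetricSpace X] {g : ℝ≥0 → ℝ≥0} {C : ℝ≥0}

lemma exists_disjoint_gaugeContent_univ_le
    (hC : ∀ U : Set X, gaugeContent g (vitaliHull U) ≤ C * (g (nndiam U) : ℝ≥0∞))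
    (s : Finset (Opens X)) (hs : univ ⊆ ⋃ U ∈ s, (U : Set X)) :
    ∃ u ⊆ s, (u : Set (Opens X)).PairwiseDisjoint (fun U => (U : Set X)) ∧
      gaugeContent g (univ : Set X) ≤ ∑ U ∈ u, C * (g (nndiam (U : Set X)) : ℝ≥0∞) := by
  classical
  obtain ⟨u, hu, hdisj, hcov⟩ := exists_pairwiseDisjoint_greedy (fun U : Opens X => (U : Set X))
    (fun U => nndiam (U : Set X)) (s.filter fun U => (U : Set X).Nonempty)
    fun U hU => (Finset.mem_filter.1 hU).2
  refine ⟨u, hu.trans (Finset.filter_subset _ _), hdisj, ?_⟩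
  have hhull : (univ : Set X) ⊆ ⋃ U ∈ u, vitaliHull (U : Set X) := fun x hx => by
    obtain ⟨V, hV, hxV⟩ := mem_iUnion₂.1 (hs hx)
    obtain ⟨U, hU, h⟩ := hcov V (Finset.mem_filter.2 ⟨hV, x, hxV⟩)
    exact mem_iUnion₂.2 ⟨U, hU, V, h, hxV⟩
  calc gaugeContent g univ ≤ ∑ U ∈ u, gaugeContent g (vitaliHull (U : Set X)) :=
        (measure_mono hhull).trans (measure_biUnion_finset_le u _)
    _ ≤ _ := Finset.sum_le_sum fun U _ => hC U

variable [CompactSpace X] [MeasurableSpace X] [BorelSpace X]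

lemma exists_frostman_measure
    (hC : ∀ U : Set X, gaugeContent g (vitaliHull U) ≤ C * (g (nndiam U) : ℝ≥0∞))
    (hg : 0 < gaugeContent g (univ : Set X)) :
    ∃ μ : Measure X, μ univ ≠ 0 ∧ ∀ U, IsOpen U → μ U ≤ (C * g (nndiam U) : ℝ≥0) := by
  have : Nonempty X := by
    by_contra hX
    rw [not_nonempty_iff] at hX
    simp [univ_eq_empty_iff.2 hX] at hg
  obtain ⟨c, hc0, hc⟩ := ENNReal.lt_iff_exists_nnreal_btwn.1 hg
  have hcover (s : Finset (Opens X)) (hs : univ ⊆ ⋃ U ∈ s, (U : Set X)) :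
      ∃ u ⊆ s, (u : Set (Opens X)).PairwiseDisjoint (fun U => (U : Set X)) ∧
        c ≤ ∑ U ∈ u, C * g (nndiam (U : Set X)) := by
    obtain ⟨u, hus, hdisj, hu⟩ := exists_disjoint_gaugeContent_univ_le hC s hs
    exact ⟨u, hus, hdisj, by exact_mod_cast hc.le.trans hu⟩
  obtain ⟨μ, hμ, hμU⟩ := exists_measure_le_of_fractionalCover
    (τ := fun U : Opens X => C * g (nndiam (U : Set X))) (c := c) fun w b hb => by
      refine mul_le_sum_of_disjoint_subcovers hcover w.support w b fun x => (hb x).trans_eq ?_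
      simp [coverMultiplicity, Finsupp.linearCombination_apply, Finsupp.sum]
  exact ⟨μ, by simpa [hμ] using hc0.ne', fun U hU => hμU ⟨U, hU⟩⟩

end Frostman

section Redistribution

variable {X ι : Type*}

lemma exists_finset_measure_inter_biUnion_between [MeasurableSpace X] (μ : Measure X) (P : Set X)
    {V : ι → Set X} {s : Finset ι} {a ε : ℝ≥0∞} (hV : ∀ i ∈ s, μ (V i) ≤ ε)
    (ha : a ≤ μ (P ∩ ⋃ i ∈ s, V i)) :
    ∃ t ⊆ s, a ≤ μ (P ∩ ⋃ i ∈ t, V i) ∧ μ (P ∩ ⋃ i ∈ t, V i) ≤ a + ε := by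
  classical
  induction s using Finset.induction_on with
  | empty => exact ⟨∅, subset_rfl, ha, by simp⟩
  | insert i s _ ih =>
    by_cases hs : a ≤ μ (P ∩ ⋃ j ∈ s, V j)
    · obtain ⟨t, hts, ht⟩ := ih (fun j hj => hV j (Finset.mem_insert_of_mem hj)) hs
      exact ⟨t, hts.trans (Finset.subset_insert i s), ht⟩
    · refine ⟨insert i s, subset_rfl, ha, ?_⟩
      have hsub : P ∩ ⋃ j ∈ insert i s, V j ⊆ (P ∩ ⋃ j ∈ s, V j) ∪ V i := by
        rw [Finset.set_biUnion_insert, inter_union_distrib_left]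
        exact union_subset (inter_subset_right.trans subset_union_right) subset_union_left
      calc μ (P ∩ ⋃ j ∈ insert i s, V j) ≤ μ (P ∩ ⋃ j ∈ s, V j) + μ (V i) :=
            (measure_mono hsub).trans (measure_union_le _ _)
        _ ≤ a + ε := add_le_add (not_le.1 hs).le (hV i (Finset.mem_insert_self i s))

/-- The measure that concentrates the `ν`-mass of each `P i` on `A i`, proportionally to `ν`. -/
noncomputable def concentrate [MeasurableSpace X] [Fintype ι] (ν : Measure X) (P A : ι → Set X) :
    Measure X :=
  ∑ i, (ν (P i) / ν (A i)) • ν.restrict (A i)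

section Concentrate

variable [MeasurableSpace X] [Fintype ι] {ν : Measure X} {P A : ι → Set X}

lemma concentrate_apply (hA : ∀ i, MeasurableSet (A i)) (S : Set X) :
    concentrate ν P A S = ∑ i, ν (P i) / ν (A i) * ν (S ∩ A i) := by
  rw [concentrate, Measure.finsetSum_apply]
  exact Finset.sum_congr rfl fun i _ => by
    rw [Measure.smul_apply, Measure.restrict_apply' (hA i), smul_eq_mul]

lemma concentrate_compl_iUnion (hA : ∀ i, MeasurableSet (A i)) :
    concentrate ν P A (⋃ i, A i)ᶜ = 0 := by
  rw [concentrate_apply hA]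
  refine Finset.sum_eq_zero fun i _ => ?_
  rw [(disjoint_compl_left_iff_subset.2 (subset_iUnion A i)).inter_eq, measure_empty, mul_zero]

lemma sum_measure_inter_of_partition (hP : ∀ i, MeasurableSet (P i))
    (hPd : Pairwise (Function.onFun Disjoint P)) (hPu : ⋃ i, P i = univ) (S : Set X) :
    ∑ i, ν (S ∩ P i) = ν S := by
  have h : ν.restrict S (⋃ i, P i) = ∑' i, ν.restrict S (P i) := measure_iUnion hPd hP
  rw [hPu, Measure.restrict_apply_univ, tsum_fintype] at h
  simpa only [Measure.restrict_apply (hP _), inter_comm] using h.symm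

end Concentrate

variable [MetricSpace X]

/-- `Redistributes ρ ν ν'` says that `ν'` arises from `ν` by moving mass by distances less than
`ρ`, increasing the density at most `8`-fold. -/
structure Redistributes [MeasurableSpace X] (ρ : ℝ≥0) (ν ν' : Measure X) : Prop where
  le : ν' ≤ (8 : ℝ≥0∞) • ν
  measure_univ : ν' univ = ν univ
  le_thickening : ∀ U : Set X, ν' U ≤ ν (Metric.thickening ρ U)

section Measurable

variable [MeasurableSpace X] [Fintype ι] {ν : Measure X} {P A : ι → Set X}

lemma redistributes_concentrate [IsFiniteMeasure ν] {ρ : ℝ≥0} (hP : ∀ i, MeasurableSet (P i))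
    (hPd : Pairwise (Function.onFun Disjoint P)) (hPu : ⋃ i, P i = univ)
    (hPρ : ∀ i, ∀ x ∈ P i, ∀ y ∈ P i, dist x y < ρ) (hA : ∀ i, MeasurableSet (A i))
    (hAP : ∀ i, A i ⊆ P i) (hPA : ∀ i, ν (P i) ≤ 8 * ν (A i)) :
    Redistributes ρ ν (concentrate ν P A) := by
  have hsum := sum_measure_inter_of_partition (ν := ν) hP hPd hPu
  have hmass (i : ι) : ν (P i) / ν (A i) * ν (A i) = ν (P i) :=
    ENNReal.div_mul_cancel' (fun h => by simpa [h] using hPA i) fun h =>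
      absurd h (measure_ne_top _ _)
  refine ⟨Measure.le_iff'.2 fun U => ?_, ?_, fun U => ?_⟩
  · rw [concentrate_apply hA, Measure.smul_apply, smul_eq_mul, ← hsum U, Finset.mul_sum]
    gcongr with i
    · exact ENNReal.div_le_of_le_mul (hPA i)
    · exact hAP i
  · rw [concentrate_apply hA, ← hsum univ]
    simp only [univ_inter, hmass]
  · rw [concentrate_apply hA, ← hsum (Metric.thickening ρ U)]
    refine Finset.sum_le_sum fun i _ => ?_
    rcases (U ∩ A i).eq_empty_or_nonempty with h | ⟨x, hxU, hxA⟩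
    · simp [h]
    · have hsub : P i ⊆ Metric.thickening ρ U ∩ P i := fun y hy =>
        ⟨Metric.mem_thickening_iff.2 ⟨x, hxU, hPρ i y hy x (hAP i hxA)⟩, hy⟩
      calc ν (P i) / ν (A i) * ν (U ∩ A i) ≤ ν (P i) / ν (A i) * ν (A i) := by
            gcongr; exact inter_subset_right
        _ = ν (P i) := hmass i
        _ ≤ ν (Metric.thickening ρ U ∩ P i) := measure_mono hsub

namespace Redistributes

variable {ρ : ℝ≥0} {ν' : Measure X}

lemma apply_le (h : Redistributes ρ ν ν') (U : Set X) : ν' U ≤ 8 * ν U := h.le U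

lemma isFiniteMeasure [IsFiniteMeasure ν] (h : Redistributes ρ ν ν') : IsFiniteMeasure ν' :=
  ⟨h.measure_univ.trans_lt (measure_lt_top ν univ)⟩

lemma absolutelyContinuous (h : Redistributes ρ ν ν') : ν' ≪ ν :=
  (Measure.absolutelyContinuous_of_le h.le).trans (Measure.smul_absolutelyContinuous)

lemma nullSingletonClass [NullSingletonClass ν] (h : Redistributes ρ ν ν') :
    NullSingletonClass ν' :=
  ⟨fun x => h.absolutelyContinuous (measure_singleton x)⟩

end Redistributes

end Measurable

variable [CompactSpace X] [MeasurableSpace X] [BorelSpace X]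

lemma exists_finite_measurable_partition {V : X → Set X} (hV : ∀ x, IsOpen (V x))
    (hxV : ∀ x, x ∈ V x) :
    ∃ (n : ℕ) (P : Fin n → Set X), (∀ i, MeasurableSet (P i)) ∧
      Pairwise (Function.onFun Disjoint P) ∧ ⋃ i, P i = univ ∧ ∀ i, ∃ x, P i ⊆ V x := by
  obtain ⟨t, ht⟩ := CompactSpace.elim_nhds_subcover V fun x => (hV x).mem_nhds (hxV x)
  let W : Fin t.card → Set X := fun i => V (t.equivFin.symm i)
  have hW (i) : MeasurableSet (W i) := (hV _).measurableSet
  refine ⟨t.card, disjointed W, fun i => disjointedRec (fun _ j h => h.diff (hW j)) (hW i),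
    disjoint_disjointed W, ?_, fun i => ⟨_, disjointed_subset W i⟩⟩
  rw [iUnion_disjointed, ← top_eq_univ, ← ht]
  exact (t.equivFin.symm.surjective.iUnion_comp fun x : t => V x).trans (iUnion_coe_set _ _)

lemma exists_isOpen_mem_measure_le (ν : Measure X) [IsFiniteMeasure ν] [NullSingletonClass ν]
    {ε : ℝ≥0∞} (hε : ε ≠ 0) (x : X) : ∃ V, IsOpen V ∧ x ∈ V ∧ ν V ≤ ε := by
  obtain ⟨V, hxV, hV, hνV⟩ := ({x} : Set X).exists_isOpen_lt_of_lt (μ := ν) ε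
    (by simpa using pos_iff_ne_zero.2 hε)
  exact ⟨V, hV, hxV rfl, hνV.le⟩

variable (ν : Measure X) [IsFiniteMeasure ν]

lemma exists_measurable_subset_quarter [NullSingletonClass ν] {P : Set X} (hP : MeasurableSet P) :
    ∃ M ⊆ P, MeasurableSet M ∧ ν P ≤ 4 * ν M ∧ ν P ≤ 4 * ν (P \ M) := by
  rcases eq_or_ne (ν P) 0 with h0 | h0
  · exact ⟨∅, empty_subset _, .empty, by simp [h0]⟩
  choose V hV hxV hVν using
    exists_isOpen_mem_measure_le ν (ENNReal.div_pos h0 (by norm_num : (4 : ℝ≥0∞) ≠ ⊤)).ne'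
  obtain ⟨s, hs⟩ := CompactSpace.elim_nhds_subcover V fun x => (hV x).mem_nhds (hxV x)
  obtain ⟨t, -, hle, hge⟩ := exists_finset_measure_inter_biUnion_between ν P (s := s)
    (a := ν P / 4) (fun x _ => hVν x) (by
      rw [hs, top_eq_univ, inter_univ]
      exact ENNReal.div_le_of_le_mul (le_mul_of_one_le_right zero_le (by norm_num)))
  have hM : MeasurableSet (⋃ x ∈ t, V x) := t.measurableSet_biUnion fun x _ => (hV x).measurableSet
  refine ⟨P ∩ ⋃ x ∈ t, V x, inter_subset_left, hP.inter hM, ?_, ?_⟩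
  · rwa [ENNReal.div_le_iff_le_mul (by simp) (by simp), mul_comm] at hle
  · have hsplit : ν P / 2 + ν P / 2 ≤ ν P / 2 + ν (P \ ⋃ x ∈ t, V x) := by
      calc ν P / 2 + ν P / 2 = ν (P ∩ ⋃ x ∈ t, V x) + ν (P \ ⋃ x ∈ t, V x) := by
            rw [ENNReal.add_halves, measure_inter_add_sdiff P hM]
        _ ≤ ν P / 2 + ν (P \ ⋃ x ∈ t, V x) := by
            gcongr
            refine hge.trans_eq ?_
            rw [← two_mul, ← mul_div_assoc,
              ENNReal.div_eq_div_iff (by simp) (by simp) (by simp) (by simp)]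
            ring
    have hhalf := (ENNReal.add_le_add_iff_left (by finiteness)).1 hsplit
    rw [ENNReal.div_le_iff_le_mul (by simp) (by simp), mul_comm] at hhalf
    rw [sdiff_self_inter]
    exact hhalf.trans (by gcongr; norm_num)

lemma exists_isCompact_subset_half {M : Set X} (hM : MeasurableSet M) :
    ∃ A ⊆ M, IsCompact A ∧ ν M ≤ 2 * ν A := by
  rcases eq_or_ne (ν M) 0 with h0 | h0
  · exact ⟨∅, empty_subset _, isCompact_empty, by simp [h0]⟩
  · obtain ⟨A, hA, hAc, hAν⟩ := hM.exists_lt_isCompact_of_ne_top (measure_ne_top ν M)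
      (ENNReal.half_lt_self h0 (measure_ne_top ν M))
    refine ⟨A, hA, hAc, ?_⟩
    simpa [mul_comm] using (ENNReal.div_le_iff_le_mul (by simp) (by simp)).1 hAν.le

variable [NullSingletonClass ν]

lemma exists_disjoint_isCompact_subset {P : Set X} (hP : MeasurableSet P) :
    ∃ A : Bool → Set X, Disjoint (A true) (A false) ∧
      ∀ b, A b ⊆ P ∧ IsCompact (A b) ∧ ν P ≤ 8 * ν (A b) := by
  obtain ⟨M, hMP, hM, hPM, hPM'⟩ := exists_measurable_subset_quarter ν hP
  obtain ⟨A, hAM, hA, hνA⟩ := exists_isCompact_subset_half ν hM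
  obtain ⟨B, hBM, hB, hνB⟩ := exists_isCompact_subset_half ν (hP.diff hM)
  have h8 {s t : Set X} (h4 : ν P ≤ 4 * ν s) (h2 : ν s ≤ 2 * ν t) : ν P ≤ 8 * ν t := by
    calc ν P ≤ 4 * (2 * ν t) := h4.trans (by gcongr)
      _ = 8 * ν t := by rw [← mul_assoc]; norm_num
  refine ⟨fun b => bif b then A else B, disjoint_sdiff_right.mono hAM hBM, fun b => ?_⟩
  cases b
  · exact ⟨hBM.trans sdiff_subset, hB, h8 hPM' hνB⟩
  · exact ⟨hAM.trans hMP, hA, h8 hPM hνA⟩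

lemma exists_redistributes_disjoint_support {ρ : ℝ≥0} (hρ : 0 < ρ) :
    ∃ ν' : Bool → Measure X, (∀ b, Redistributes ρ ν (ν' b)) ∧
      Disjoint (ν' true).support (ν' false).support := by
  obtain ⟨n, P, hP, hPd, hPu, hPρ⟩ := exists_finite_measurable_partition
    (V := fun x : X => Metric.ball x (ρ / 2)) (fun _ => Metric.isOpen_ball)
    fun _ => Metric.mem_ball_self (by positivity)
  have hdist (i : Fin n) : ∀ x ∈ P i, ∀ y ∈ P i, dist x y < ρ := fun x hx y hy => by
    obtain ⟨z, hz⟩ := hPρ i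
    linarith [dist_triangle_right x y z, Metric.mem_ball.1 (hz hx), Metric.mem_ball.1 (hz hy)]
  choose A hdisj hA using fun i => exists_disjoint_isCompact_subset ν (hP i)
  have hmeas (b : Bool) (i : Fin n) : MeasurableSet (A i b) := (hA i b).2.1.measurableSet
  refine ⟨fun b => concentrate ν P fun i => A i b, fun b => redistributes_concentrate hP hPd hPu
    hdist (hmeas b) (fun i => (hA i b).1) fun i => (hA i b).2.2, ?_⟩
  have hsupp (b : Bool) : (concentrate ν P fun i => A i b).support ⊆ ⋃ i, A i b :=
    Measure.support_subset_of_isClosed (isClosed_iUnion_of_finite fun i => (hA i b).2.1.isClosed)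
      (concentrate_compl_iUnion (hmeas b))
  refine Disjoint.mono (hsupp true) (hsupp false) ?_
  simp only [disjoint_iUnion_left, disjoint_iUnion_right]
  intro j i
  rcases eq_or_ne i j with rfl | hij
  · exact hdisj i
  · exact (hPd hij).mono (hA i true).1 (hA j false).1

end Redistribution

section Scales

variable {k φ : ℝ≥0 → ℝ≥0} {C D : ℝ≥0} {δ ρ : ℕ → ℝ≥0}

lemma exists_sum_Ico_le {r : ℕ → ℝ≥0} (hr : ∀ j, 0 < r j) :
    ∃ ρ : ℕ → ℝ≥0, (∀ j, 0 < ρ j) ∧ ∀ j n, ∑ i ∈ Finset.Ico j n, ρ i ≤ r j := by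
  obtain ⟨w, hw, c, hwc, hc⟩ := NNReal.exists_pos_sum_of_countable one_ne_zero ℕ
  have hne (i : ℕ) : (Finset.range (i + 1)).Nonempty := Finset.nonempty_range_add_one
  refine ⟨fun i => (Finset.range (i + 1)).inf' (hne i) r * w i, fun j =>
    mul_pos ((Finset.lt_inf'_iff _).2 fun i _ => hr i) (hw j), fun j n => ?_⟩
  calc ∑ i ∈ Finset.Ico j n, (Finset.range (i + 1)).inf' (hne i) r * w i
      ≤ ∑ i ∈ Finset.Ico j n, r j * w i := by
        gcongr with i hi
        exact Finset.inf'_le r (Finset.mem_range_succ_iff.2 (Finset.mem_Ico.1 hi).1)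
    _ = r j * ∑ i ∈ Finset.Ico j n, w i := (Finset.mul_sum ..).symm
    _ ≤ r j :=
      mul_le_of_le_one_right zero_le ((sum_le_hasSum _ (fun _ _ => zero_le) hwc).trans hc.le)

lemma eventually_forall_apply_add_two_mul_le (hk : Continuous k) (hkpos : ∀ t, 0 < t → 0 < k t)
    {a : ℝ≥0} (ha : 0 < a) (D : ℝ≥0) :
    ∀ᶠ r in 𝓝 (0 : ℝ≥0), ∀ t ∈ Icc a D, k (t + 2 * r) ≤ 2 * k t := by
  refine isCompact_Icc.eventually_forall_of_forall_eventually fun t ht => ?_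
  have hleft : Continuous fun z : ℝ≥0 × ℝ≥0 => k (z.2 + 2 * z.1) := by fun_prop
  have hright : Continuous fun z : ℝ≥0 × ℝ≥0 => 2 * k z.2 := by fun_prop
  refine (hleft.continuousAt.eventually_lt hright.continuousAt ?_).mono fun _ h => h.le
  simpa [two_mul] using hkpos t (ha.trans_le ht.1)

lemma exists_strictAnti_forall_eventually {p : ℕ → ℝ≥0 → Prop} (hp : ∀ j, ∀ᶠ t in 𝓝 0, p j t) :
    ∃ δ : ℕ → ℝ≥0, StrictAnti δ ∧ Tendsto δ atTop (𝓝 0) ∧ ∀ j, p j (δ j) := by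
  have hlt : (1 / 2 : ℝ≥0) < 1 := NNReal.half_lt_self one_ne_zero
  have hlim : Tendsto (fun n : ℕ => (1 / 2 : ℝ≥0) ^ n) atTop (𝓝 0) :=
    tendsto_pow_atTop_nhds_zero_of_lt_one zero_le hlt
  obtain ⟨ψ, hψ, hpψ⟩ := extraction_forall_of_eventually fun j => hlim.eventually (hp j)
  exact ⟨fun j => (1 / 2) ^ ψ j, (pow_right_strictAnti₀ (by positivity) hlt).comp_strictMono hψ,
    hlim.comp hψ.tendsto_atTop, hpψ⟩

/-- Scales `δ j` and steps `ρ j` adapted to a gauge `φ * k` on a space of diameter `D`: displacing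
mass by all the steps from `j` on together affects neither the size of a set of diameter at least
`δ j` nor its `k`-value by more than a constant factor. The rate `16⁻ʲ` of `φ (δ j)` absorbs the
factor `8ʲ` lost by `j` redistributions. -/
structure AdaptedScales (k φ : ℝ≥0 → ℝ≥0) (D : ℝ≥0) (δ ρ : ℕ → ℝ≥0) : Prop where
  strictAnti : StrictAnti δ
  tendsto : Tendsto δ atTop (𝓝 0)
  apply_le : ∀ j, φ (δ j) ≤ (1 / 16) ^ j
  pos : ∀ j, 0 < ρ j
  sum_le : ∀ j n, ∑ i ∈ Finset.Ico j n, ρ i ≤ δ j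
  apply_add_le : ∀ j n, ∀ t ∈ Icc (δ j) D, k (t + 2 * ∑ i ∈ Finset.Ico j n, ρ i) ≤ 2 * k t

lemma exists_adaptedScales (hkc : Continuous k) (hk : Monotone k) (hkpos : ∀ t, 0 < t → 0 < k t)
    (hφ : Tendsto φ (𝓝 0) (𝓝 0)) (D : ℝ≥0) : ∃ δ ρ, AdaptedScales k φ D δ ρ := by
  obtain ⟨δ, hδ, hδ0, hφδ⟩ := exists_strictAnti_forall_eventually
    fun j => hφ.eventually (Iic_mem_nhds (by positivity : (0 : ℝ≥0) < (1 / 16) ^ j))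
  have hδpos (j : ℕ) : 0 < δ j := pos_of_gt (hδ j.lt_succ_self)
  have hr (j : ℕ) : ∃ r, 0 < r ∧ r ≤ δ j ∧ ∀ t ∈ Icc (δ j) D, k (t + 2 * r) ≤ 2 * k t := by
    have h := (eventually_forall_apply_add_two_mul_le hkc hkpos (hδpos j) D).and
      (Iic_mem_nhds (hδpos j))
    obtain ⟨r, ⟨hr, hrδ⟩, hr0⟩ :=
      ((h.filter_mono nhdsWithin_le_nhds).and (self_mem_nhdsWithin (s := Ioi 0))).exists
    exact ⟨r, hr0, hrδ, hr⟩
  choose r hr0 hrδ hrk using hr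
  obtain ⟨ρ, hρ, hsum⟩ := exists_sum_Ico_le hr0
  exact ⟨δ, ρ, hδ, hδ0, hφδ, hρ, fun j n => (hsum j n).trans (hrδ j), fun j n t ht =>
    (hk (by gcongr; exact hsum j n)).trans (hrk j t ht)⟩

end Scales

section Branch

variable {X : Type*} [MetricSpace X] [MeasurableSpace X] {ρ : ℕ → ℝ≥0} {ν : ℕ → Measure X}

lemma measure_le_thickening_sum (hν : ∀ n, Redistributes (ρ n) (ν n) (ν (n + 1))) {j n : ℕ}
    (hjn : j < n) (U : Set X) :
    ν n U ≤ ν j (Metric.thickening (∑ i ∈ Finset.Ico j n, ρ i : ℝ≥0) U) := by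
  induction n, hjn using Nat.le_induction generalizing U with
  | base => simpa using (hν j).le_thickening U
  | succ n hjn ih =>
    refine ((hν n).le_thickening U).trans ((ih _).trans (measure_mono ?_))
    rw [Finset.sum_Ico_succ_top (Nat.le_of_succ_le hjn), NNReal.coe_add]
    exact Metric.thickening_thickening_subset _ _ _

lemma measure_le_pow_mul (hν : ∀ n, Redistributes (ρ n) (ν n) (ν (n + 1))) (n : ℕ) (U : Set X) :
    ν n U ≤ 8 ^ n * ν 0 U := by
  induction n with
  | zero => simp
  | succ n ih =>
    calc ν (n + 1) U ≤ 8 * (8 ^ n * ν 0 U) := ((hν n).apply_le U).trans (by gcongr)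
      _ = 8 ^ (n + 1) * ν 0 U := by rw [pow_succ', mul_assoc]

variable [CompactSpace X] {k φ : ℝ≥0 → ℝ≥0} {C D : ℝ≥0} {δ : ℕ → ℝ≥0} {U : Set X}

lemma AdaptedScales.measure_le_of_mem_Icc
    (hδ : AdaptedScales k φ (nndiam (univ : Set X)) δ ρ)
    (hk : Monotone k) (hφ : Monotone φ) (hφ3 : ∀ t, φ (3 * t) ≤ 2 * φ t)
    (hν : ∀ n, Redistributes (ρ n) (ν n) (ν (n + 1)))
    (hν0 : ∀ U, IsOpen U → ν 0 U ≤ (C * (φ (nndiam U) * k (nndiam U)) : ℝ≥0))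
    {i n : ℕ} (hU : nndiam U ∈ Icc (δ (i + 1)) (δ i)) (hn : i + 1 < n) :
    ν n U ≤ (32 * C * (1 / 2) ^ i * k (nndiam U) : ℝ≥0) := by
  set t := nndiam U
  set R := ∑ l ∈ Finset.Ico (i + 1) n, ρ l
  set V := Metric.thickening (R : ℝ) U
  have hV : nndiam V ≤ t + 2 * R := nndiam_thickening_le R U
  have hφV : φ (nndiam V) ≤ 2 * (1 / 16) ^ i := by
    calc φ (nndiam V) ≤ φ (3 * t) := hφ <| hV.trans <| by
          calc t + 2 * R ≤ t + 2 * t := by gcongr; exact (hδ.sum_le _ n).trans hU.1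
            _ = 3 * t := by ring
      _ ≤ 2 * φ t := hφ3 t
      _ ≤ 2 * (1 / 16) ^ i := by gcongr; exact (hφ hU.2).trans (hδ.apply_le i)
  have hkV : k (nndiam V) ≤ 2 * k t :=
    (hk hV).trans (hδ.apply_add_le _ n t ⟨hU.1, nndiam_mono (subset_univ U)⟩)
  have hpow : (8 : ℝ≥0) ^ i * (1 / 16) ^ i = (1 / 2) ^ i := by
    rw [← mul_pow]; congr 1; rw [mul_one_div, div_eq_div_iff] <;> norm_num
  calc ν n U ≤ ν (i + 1) V := measure_le_thickening_sum hν hn U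
    _ ≤ 8 ^ (i + 1) * ν 0 V := measure_le_pow_mul hν (i + 1) V
    _ ≤ (8 ^ (i + 1) * (C * (φ (nndiam V) * k (nndiam V))) : ℝ≥0) := by
        rw [ENNReal.coe_mul (8 ^ (i + 1))]
        gcongr
        · simp
        · exact hν0 V Metric.isOpen_thickening
    _ ≤ (8 ^ (i + 1) * (C * (2 * (1 / 16) ^ i * (2 * k t))) : ℝ≥0) := by gcongr
    _ = (32 * C * (8 ^ i * (1 / 16) ^ i) * k t : ℝ≥0) := by congr 1; ring
    _ = _ := by rw [hpow]

lemma AdaptedScales.exists_forall_eventually_measure_le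
    (hδ : AdaptedScales k φ (nndiam (univ : Set X)) δ ρ) (hk : Monotone k) (hk0 : k 0 = 0)
    (hφ : Monotone φ) (hφ3 : ∀ t, φ (3 * t) ≤ 2 * φ t)
    (hν : ∀ n, Redistributes (ρ n) (ν n) (ν (n + 1)))
    (hν0 : ∀ U, IsOpen U → ν 0 U ≤ (C * (φ (nndiam U) * k (nndiam U)) : ℝ≥0))
    {ε : ℝ≥0} (hε : 0 < ε) :
    ∃ d > 0, ∀ U : Set X, IsOpen U → nndiam U ≤ d →
      ∀ᶠ n in atTop, ν n U ≤ (ε * k (nndiam U) : ℝ≥0) := by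
  have hlt : (1 / 2 : ℝ≥0) < 1 := NNReal.half_lt_self one_ne_zero
  have hlim : Tendsto (fun i : ℕ => 32 * C * (1 / 2 : ℝ≥0) ^ i) atTop (𝓝 0) := by
    simpa using (tendsto_pow_atTop_nhds_zero_of_lt_one zero_le hlt).const_mul (32 * C)
  obtain ⟨J, hJ⟩ := eventually_atTop.1 (hlim.eventually_le_const hε)
  refine ⟨δ (J + 1), pos_of_gt (hδ.strictAnti (J + 1).lt_succ_self), fun U hU hUd => ?_⟩
  rcases eq_or_ne (nndiam U) 0 with h0 | h0
  · have hzero : ν 0 U = 0 := by simpa [h0, hk0] using hν0 U hU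
    exact .of_forall fun n => (measure_le_pow_mul hν n U).trans (by simp [hzero])
  have hex : ∃ j, δ j ≤ nndiam U :=
    (hδ.tendsto.eventually_le_const (pos_iff_ne_zero.2 h0)).exists
  classical
  have hJfind : J < Nat.find hex := (Nat.lt_find_iff hex J).2 fun m hm =>
    not_le.2 (hUd.trans_lt (hδ.strictAnti (Nat.lt_succ_of_le hm)))
  obtain ⟨i, hi⟩ := Nat.exists_eq_add_one_of_ne_zero (Nat.ne_zero_of_lt hJfind)
  have hmem : nndiam U ∈ Icc (δ (i + 1)) (δ i) :=
    ⟨hi ▸ Nat.find_spec hex, (not_le.1 (Nat.find_min hex (m := i) (by omega))).le⟩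
  filter_upwards [eventually_gt_atTop (i + 1)] with n hn
  refine (hδ.measure_le_of_mem_Icc hk hφ hφ3 hν hν0 hmem hn).trans ?_
  gcongr
  exact hJ i (by omega)

end Branch

section NotCovered

variable {X : Type*} [MetricSpace X] [CompactSpace X] {k : ℝ≥0 → ℝ≥0}

lemma exists_isOpen_cover_of_hausdorffM_lt (hk : Continuous k) (hk0 : k 0 = 0) {A : Set X}
    {c : ℝ≥0∞} (hA : hausdorffM (fun t => (k t : ℝ≥0∞)) A < c) {d : ℝ≥0} (hd : 0 < d) :
    ∃ O : ℕ → Set X, (∀ i, IsOpen (O i)) ∧ (∀ i, nndiam (O i) ≤ d) ∧ A ⊆ ⋃ i, O i ∧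
      ∑' i, (k (nndiam (O i)) : ℝ≥0∞) ≤ c := by
  obtain ⟨U, hAU, hUd, hU⟩ := hausdorffM_apply_lt hk0 hA (half_pos hd)
  obtain ⟨O, hO, hUO, hOd, hle⟩ := exists_isOpen_cover hk U (d := fun _ => d)
    (fun i => (hUd i).trans_lt (half_lt_self hd)) (tsub_pos_of_lt hU).ne'
  exact ⟨O, hO, fun i => (hOd i).le, hAU.trans (iUnion_mono hUO),
    hle.trans_eq (add_tsub_cancel_of_le hU.le)⟩

lemma CoveredByFinite.exists_isOpen_cover (hk : Continuous k) (hk0 : k 0 = 0) {K : Set X}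
    (hK : CoveredByFinite (hausdorffM fun t => (k t : ℝ≥0∞)) K) {d : ℝ≥0 → ℝ≥0}
    (hd : ∀ ε, 0 < ε → 0 < d ε) {η : ℝ≥0∞} (hη : η ≠ 0) :
    ∃ (ε : ℕ → ℝ≥0) (O : ℕ → ℕ → Set X), (∀ m, 0 < ε m) ∧ (∀ m i, IsOpen (O m i)) ∧
      (∀ m i, nndiam (O m i) ≤ d (ε m)) ∧ K ⊆ ⋃ m, ⋃ i, O m i ∧
      ∑' m, ∑' i, ((ε m * k (nndiam (O m i)) : ℝ≥0) : ℝ≥0∞) < η := by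
  obtain ⟨A, hA, hKA⟩ := hK
  choose c hcA _ using fun m => ENNReal.lt_iff_exists_nnreal_btwn.1 (hA m)
  have hc (m : ℕ) : 0 < c m := by exact_mod_cast zero_le.trans_lt (hcA m)
  obtain ⟨w, hw, hwη⟩ := ENNReal.exists_pos_sum_of_countable hη ℕ
  have hε (m : ℕ) : 0 < w m / c m := div_pos (hw m) (hc m)
  choose O hO hOd hAO hOc using fun m =>
    exists_isOpen_cover_of_hausdorffM_lt hk hk0 (hcA m) (hd _ (hε m))
  refine ⟨_, O, hε, hO, hOd, hKA.trans (iUnion_mono hAO), lt_of_le_of_lt ?_ hwη⟩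
  refine ENNReal.tsum_le_tsum fun m => ?_
  calc ∑' i, ((w m / c m * k (nndiam (O m i)) : ℝ≥0) : ℝ≥0∞)
      = (w m / c m : ℝ≥0) * ∑' i, (k (nndiam (O m i)) : ℝ≥0∞) := by
        simp only [ENNReal.coe_mul, ENNReal.tsum_mul_left]
    _ ≤ (w m / c m : ℝ≥0) * c m := by gcongr; exact hOc m
    _ = w m := by rw [← ENNReal.coe_mul, div_mul_cancel₀ _ (hc m).ne']

variable [MeasurableSpace X]

lemma not_coveredByFinite_iInter_support (hk : Continuous k) (hk0 : k 0 = 0) {ν : ℕ → Measure X}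
    (hν : Antitone fun n => (ν n).support) {M : ℝ≥0∞} (hM : M ≠ 0) (hMν : ∀ n, M ≤ ν n univ)
    (hsmall : ∀ ε : ℝ≥0, 0 < ε → ∃ d > 0, ∀ U : Set X, IsOpen U → nndiam U ≤ d →
      ∀ᶠ n in atTop, ν n U ≤ (ε * k (nndiam U) : ℝ≥0)) :
    ¬CoveredByFinite (hausdorffM fun t => (k t : ℝ≥0∞)) (⋂ n, (ν n).support) := by
  intro hcov
  choose! d hd hsmall using hsmall
  obtain ⟨ε, O, hε, hO, hOd, hKO, hsum⟩ := hcov.exists_isOpen_cover hk hk0 hd hM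
  have hclosed (n : ℕ) : IsClosed (ν n).support := Measure.isClosed_support
  obtain ⟨F, hF⟩ := (isClosed_iInter hclosed).isCompact.elim_finite_subcover
    (fun p : ℕ × ℕ => O p.1 p.2) (fun p => hO p.1 p.2) (by rwa [iUnion_prod'])
  have hFopen : IsOpen (⋃ p ∈ F, O p.1 p.2) := isOpen_biUnion fun p _ => hO p.1 p.2
  obtain ⟨m, hm⟩ := exists_subset_nhds_of_isCompact hν.directed_ge
    (fun n => (hclosed n).isCompact) fun x hx => hFopen.mem_nhds (hF hx)
  have hev : ∀ᶠ n in atTop, ∀ p ∈ F, ν n (O p.1 p.2) ≤ (ε p.1 * k (nndiam (O p.1 p.2)) : ℝ≥0) :=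
    (Finset.eventually_all F).2 fun p _ => hsmall _ (hε p.1) _ (hO p.1 p.2) (hOd p.1 p.2)
  obtain ⟨n, hn, hmn⟩ := (hev.and (eventually_ge_atTop m)).exists
  refine hsum.not_ge ?_
  calc M ≤ ν n univ := hMν n
    _ = ν n (ν n).support := (measure_of_measure_compl_eq_zero Measure.measure_compl_support).symm
    _ ≤ ν n (⋃ p ∈ F, O p.1 p.2) := measure_mono ((hν hmn).trans hm)
    _ ≤ ∑ p ∈ F, ν n (O p.1 p.2) := measure_biUnion_finset_le _ _
    _ ≤ ∑ p ∈ F, ((ε p.1 * k (nndiam (O p.1 p.2)) : ℝ≥0) : ℝ≥0∞) := Finset.sum_le_sum hn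
    _ ≤ ∑' p : ℕ × ℕ, ((ε p.1 * k (nndiam (O p.1 p.2)) : ℝ≥0) : ℝ≥0∞) := ENNReal.sum_le_tsum F
    _ = _ := ENNReal.tsum_prod (f := fun m i => ((ε m * k (nndiam (O m i)) : ℝ≥0) : ℝ≥0∞))

end NotCovered

section Trees

open PiNat

variable {α β : Type*}

lemma pairwise_disjoint_iInter_res {A : List β → Set α}
    (hA : CantorScheme.Disjoint A) :
    Pairwise (Function.onFun Disjoint fun σ : ℕ → β => ⋂ n, A (res σ n)) := by
  refine fun σ τ hστ => disjoint_left.2 fun x hσ hτ => ?_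
  rw [mem_iInter] at hσ hτ
  have hres : res σ (firstDiff σ τ) = res τ (firstDiff σ τ) :=
    res_eq_res.2 fun _ hm => apply_eq_of_lt_firstDiff hm
  refine disjoint_left.1 (hA _ (apply_firstDiff_ne hστ)) (hσ (firstDiff σ τ + 1)) ?_
  rw [hres]
  exact hτ (firstDiff σ τ + 1)

lemma exists_list_tree {p : α → Prop} {R : ℕ → α → (β → α) → Prop}
    (h : ∀ n a, p a → ∃ c : β → α, (∀ b, p (c b)) ∧ R n a c) {a₀ : α} (h₀ : p a₀) :
    ∃ f : List β → α, f [] = a₀ ∧ ∀ l, R l.length (f l) fun b => f (b :: l) := by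
  have : Nonempty α := ⟨a₀⟩
  choose! c hcp hcR using h
  let f : List β → α := List.rec a₀ fun b l a => c l.length a b
  have hf (l : List β) : p (f l) := by
    induction l with
    | nil => exact h₀
    | cons b l ih => exact hcp _ _ ih b
  exact ⟨f, rfl, fun l => hcR _ _ (hf l)⟩

end Trees

section Scheme

variable {X : Type*} [MetricSpace X] [CompactSpace X] {k : ℝ≥0 → ℝ≥0}

lemma nullSingletonClass_of_le [MeasurableSpace X] {g : ℝ≥0 → ℝ≥0} (hg : Tendsto g (𝓝 0) (𝓝 0))
    {μ : Measure X} (hμ : ∀ U, IsOpen U → μ U ≤ (g (nndiam U) : ℝ≥0∞)) : NullSingletonClass μ where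
  measure_singleton x := by
    have hlim : Tendsto (fun r : ℝ≥0 => (g (nndiam (Metric.thickening r {x})) : ℝ≥0∞))
        (𝓝[>] 0) (𝓝 0) := by
      have hx : nndiam {x} = 0 := by simp [nndiam]
      exact ENNReal.tendsto_coe.2 (hg.comp (hx ▸ tendsto_nndiam_thickening {x}))
    refine le_antisymm (ge_of_tendsto hlim ?_) zero_le
    filter_upwards [self_mem_nhdsWithin] with r hr
    exact (measure_mono (Metric.self_subset_thickening (NNReal.coe_pos.2 hr) _)).trans
      (hμ _ Metric.isOpen_thickening)

section Measurable

variable [MeasurableSpace X] [BorelSpace X]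

lemma exists_cantorScheme_redistributes {ρ : ℕ → ℝ≥0} (hρ : ∀ n, 0 < ρ n) (μ : Measure X)
    [IsFiniteMeasure μ] [NullSingletonClass μ] :
    ∃ N : List Bool → Measure X, N [] = μ ∧
      (∀ l b, Redistributes (ρ l.length) (N l) (N (b :: l))) ∧
      CantorScheme.Disjoint fun l => (N l).support := by
  obtain ⟨N, hN, hR⟩ := exists_list_tree (a₀ := μ) (β := Bool)
    (p := fun ν => IsFiniteMeasure ν ∧ NullSingletonClass ν)
    (R := fun n ν ν' => (∀ b, Redistributes (ρ n) ν (ν' b)) ∧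
      Disjoint (ν' true).support (ν' false).support)
    (fun n ν hν => by
      obtain ⟨_, _⟩ := hν
      obtain ⟨ν', hν', hdisj⟩ := exists_redistributes_disjoint_support ν (hρ n)
      exact ⟨ν', fun b => ⟨(hν' b).isFiniteMeasure, (hν' b).nullSingletonClass⟩, hν', hdisj⟩)
    ⟨inferInstance, inferInstance⟩
  refine ⟨N, hN, fun l => (hR l).1, fun l b c hbc => ?_⟩
  cases b <;> cases c <;> first | exact absurd rfl hbc | exact (hR l).2 | exact (hR l).2.symm

lemma HasVitaliCovers.exists_finite_measure (hX : HasVitaliCovers X k) (hkc : Continuous k)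
    (hk : Monotone k) (hk0 : k 0 = 0) (hkpos : ∀ t, 0 < t → 0 < k t)
    (hcov : ¬CoveredByFinite (hausdorffM fun t => (k t : ℝ≥0∞)) (univ : Set X)) :
    ∃ (φ : ℝ≥0 → ℝ≥0) (C : ℝ≥0) (μ : Measure X), Monotone φ ∧ (∀ t, φ (3 * t) ≤ 2 * φ t) ∧
      Tendsto φ (𝓝 0) (𝓝 0) ∧ IsFiniteMeasure μ ∧ NullSingletonClass μ ∧ μ univ ≠ 0 ∧
      ∀ U, IsOpen U → μ U ≤ (C * (φ (nndiam U) * k (nndiam U)) : ℝ≥0) := by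
  obtain ⟨φ, hφ, hφ3, hφ0, hpos⟩ := exists_damping_gaugeContent_pos hkc hk hk0 hkpos hcov
  obtain ⟨C, hC⟩ := hX.exists_gaugeContent_vitaliHull_le hφ hφ3
  obtain ⟨μ, hμ, hμU⟩ := exists_frostman_measure hC hpos
  have hlim : Tendsto (fun t => C * (φ t * k t)) (𝓝 0) (𝓝 0) := by
    simpa [hk0] using (hφ0.mul (hkc.tendsto 0)).const_mul C
  exact ⟨φ, C, μ, hφ, hφ3, hφ0, ⟨(hμU _ isOpen_univ).trans_lt ENNReal.coe_lt_top⟩,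
    nullSingletonClass_of_le hlim hμU, hμ, hμU⟩

end Measurable

theorem HasVitaliCovers.exists_disjoint_not_coveredByFinite (hX : HasVitaliCovers X k)
    (hkc : Continuous k) (hk : Monotone k) (hk0 : k 0 = 0) (hkpos : ∀ t, 0 < t → 0 < k t)
    (hcov : ¬CoveredByFinite (hausdorffM fun t => (k t : ℝ≥0∞)) (univ : Set X)) :
    ∃ K : (ℕ → Bool) → Set X, Pairwise (Function.onFun Disjoint K) ∧
      ∀ σ, IsCompact (K σ) ∧ ¬CoveredByFinite (hausdorffM fun t => (k t : ℝ≥0∞)) (K σ) := by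
  borelize X
  obtain ⟨φ, C, μ, hφ, hφ3, hφ0, _, _, hμ, hμU⟩ := hX.exists_finite_measure hkc hk hk0 hkpos hcov
  obtain ⟨δ, ρ, hδ⟩ := exists_adaptedScales hkc hk hkpos hφ0 (nndiam (univ : Set X))
  obtain ⟨N, rfl, hN, hdisj⟩ := exists_cantorScheme_redistributes hδ.pos μ
  refine ⟨_, pairwise_disjoint_iInter_res hdisj, fun σ =>
    ⟨(isClosed_iInter fun n => Measure.isClosed_support).isCompact, ?_⟩⟩
  have hstep (n : ℕ) :
      Redistributes (ρ n) (N (PiNat.res σ n)) (N (PiNat.res σ (n + 1))) := by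
    simpa using hN (PiNat.res σ n) (σ n)
  have hmass (n : ℕ) : N [] univ ≤ N (PiNat.res σ n) univ := by
    induction n with
    | zero => exact le_rfl
    | succ n ih => exact ih.trans_eq (hstep n).measure_univ.symm
  exact not_coveredByFinite_iInter_support hkc hk0
    (antitone_nat_of_succ_le fun n => (hstep n).absolutelyContinuous.support_mono) hμ hmass
    fun ε hε => hδ.exists_forall_eventually_measure_le hk hk0 hφ hφ3 hstep hμU hε

end Scheme

section Truncation

/-- The gauge `min h 1`, which takes finite values and has the same Hausdorff measure as `h` if
`h` is continuous at `0` with `h 0 = 0`. -/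
noncomputable def truncatedGauge (h : ℝ≥0 → ℝ≥0∞) (t : ℝ≥0) : ℝ≥0 := (min (h t) 1).toNNReal

variable {h : ℝ≥0 → ℝ≥0∞}

lemma coe_truncatedGauge (h : ℝ≥0 → ℝ≥0∞) (t : ℝ≥0) :
    (truncatedGauge h t : ℝ≥0∞) = min (h t) 1 :=
  ENNReal.coe_toNNReal (by simp)

lemma truncatedGauge_le_one (h : ℝ≥0 → ℝ≥0∞) (t : ℝ≥0) : truncatedGauge h t ≤ 1 := by
  rw [← ENNReal.coe_le_coe, coe_truncatedGauge]
  exact min_le_right _ _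

lemma truncatedGauge_zero (h0 : h 0 = 0) : truncatedGauge h 0 = 0 := by
  simp [truncatedGauge, h0]

lemma truncatedGauge_pos {t : ℝ≥0} (ht : 0 < h t) : 0 < truncatedGauge h t := by
  rw [← ENNReal.coe_lt_coe, coe_truncatedGauge]
  exact lt_min ht one_pos

lemma monotone_truncatedGauge (hh : Monotone h) : Monotone (truncatedGauge h) := fun a b hab => by
  rw [← ENNReal.coe_le_coe, coe_truncatedGauge, coe_truncatedGauge]
  exact min_le_min_right 1 (hh hab)

lemma continuous_truncatedGauge (hh : Continuous h) : Continuous (truncatedGauge h) :=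
  ENNReal.continuousOn_toNNReal.comp_continuous (hh.min continuous_const) fun t => by simp

lemma hausdorffM_truncatedGauge {X : Type*} [MetricSpace X] (hh : Continuous h) (h0 : h 0 = 0) :
    (hausdorffM (fun t => (truncatedGauge h t : ℝ≥0∞)) : OuterMeasure X) = hausdorffM h := by
  refine hausdorffM_congr ?_
  filter_upwards [(hh.tendsto' 0 0 h0).eventually_le_const one_pos] with t ht
  rw [coe_truncatedGauge, min_eq_left ht]

lemma FiniteOrder.exists_truncatedGauge_three_mul_le (hh : FiniteOrder h) (hmono : Monotone h)
    (h0 : h 0 = 0) (hpos : ∀ t, 0 < t → 0 < h t) :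
    ∃ C : ℝ≥0, ∀ t, truncatedGauge h (3 * t) ≤ C * truncatedGauge h t := by
  obtain ⟨C, hC, -⟩ := ENNReal.lt_iff_exists_nnreal_btwn.1 (max_lt hh ENNReal.one_lt_top)
  have hratio := eventually_lt_of_limsup_lt ((le_max_left _ _).trans_lt hC)
  have hC1 : (1 : ℝ≥0∞) < C := (le_max_right _ _).trans_lt hC
  rw [eventually_nhdsWithin_iff, NNReal.nhds_zero_basis.eventually_iff] at hratio
  obtain ⟨t₀, ht₀, hratio⟩ := hratio
  have hk₀ : 0 < truncatedGauge h t₀ := truncatedGauge_pos (hpos t₀ ht₀)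
  refine ⟨max C (1 / truncatedGauge h t₀), fun t => ?_⟩
  rcases eq_or_ne t 0 with rfl | ht
  · simp [truncatedGauge_zero h0]
  rcases lt_or_ge t t₀ with htt₀ | htt₀
  · have hpt : h t ≠ 0 := (hpos t (pos_iff_ne_zero.2 ht)).ne'
    have hle : h (3 * t) ≤ C * h t := by
      rw [← ENNReal.div_le_iff_le_mul (.inl hpt) (.inr (zero_lt_one.trans hC1).ne')]
      exact (hratio htt₀ (pos_iff_ne_zero.2 ht)).le
    have hle' : truncatedGauge h (3 * t) ≤ C * truncatedGauge h t := by
      rw [← ENNReal.coe_le_coe, ENNReal.coe_mul, coe_truncatedGauge, coe_truncatedGauge,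
        mul_min, mul_one]
      exact min_le_min hle hC1.le
    exact hle'.trans (by gcongr; exact le_max_left _ _)
  · calc truncatedGauge h (3 * t) ≤ 1 := truncatedGauge_le_one _ _
      _ = 1 / truncatedGauge h t₀ * truncatedGauge h t₀ := (one_div_mul_cancel hk₀.ne').symm
      _ ≤ _ := by
        gcongr
        · exact le_max_right _ _
        · exact monotone_truncatedGauge hmono htt₀

end Truncation

lemma mk_range_eq_two_power_aleph0 {α : Type*} {K : (ℕ → Bool) → Set α}
    (hK : Pairwise (Function.onFun Disjoint K)) (hne : ∀ σ, (K σ).Nonempty) :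
    Cardinal.mk (range K) = 2 ^ Cardinal.aleph0 := by
  have hinj : Function.Injective K := fun σ τ hστ => by
    by_contra hne'
    exact (hne σ).ne_empty (disjoint_self.1 (by simpa only [Function.onFun, ← hστ] using hK hne'))
  rw [← Cardinal.mk_congr (Equiv.ulift.trans (Equiv.ofInjective K hinj))]
  simp

section Compact

variable {Z : Type*} [MetricSpace Z] {Y : Set Z} {h : ℝ≥0 → ℝ≥0∞}

lemma hasVitaliCovers_truncatedGauge [CompactSpace Y] (hmono : Monotone h) (h0 : h 0 = 0)
    (hpos : ∀ t, 0 < t → 0 < h t)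
    (halt : FiniteOrder h ∨ FiniteStructuralDim Z ∨
      ∀ x y z : Z, dist x z ≤ max (dist x y) (dist y z)) :
    HasVitaliCovers Y (truncatedGauge h) := by
  have hk : Monotone (truncatedGauge h) := monotone_truncatedGauge hmono
  rcases halt with hfin | hdim | hultra
  · obtain ⟨C, hC⟩ := hfin.exists_truncatedGauge_three_mul_le hmono h0 hpos
    exact hasVitaliCovers_of_three_mul_le hk hC
  · exact hasVitaliCovers_of_finiteStructuralDim hk (hdim.of_isometry isometry_subtype_coe)
  · exact hasVitaliCovers_of_ultrametric hk fun x y z => hultra x y z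

theorem statement_4_general (hmono : Monotone h) (hcont : Continuous h) (h0 : h 0 = 0)
    (hpos : ∀ t, 0 < t → 0 < h t)
    (halt : FiniteOrder h ∨ FiniteStructuralDim Z ∨
      ∀ x y z : Z, dist x z ≤ max (dist x y) (dist y z))
    (hYcomp : IsCompact Y) (hY : ¬SigmaFiniteSet (hausdorffM h) Y) :
    ∃ D : Set (Set Z), Cardinal.mk D = 2 ^ Cardinal.aleph0 ∧ D.Pairwise Disjoint ∧
      ∀ K ∈ D, IsCompact K ∧ K ⊆ Y ∧ ¬SigmaFiniteSet (hausdorffM h) K := by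
  have : CompactSpace Y := isCompact_iff_compactSpace.1 hYcomp
  have hcov : ¬CoveredByFinite (hausdorffM h) (univ : Set Y) := fun hcov => hY <|
    CoveredByFinite.sigmaFiniteSet (by simpa using hcov.image hmono isometry_subtype_coe)
      hYcomp.isClosed
  rw [← hausdorffM_truncatedGauge hcont h0] at hcov
  obtain ⟨K, hdisj, hK⟩ :=
    (hasVitaliCovers_truncatedGauge hmono h0 hpos halt).exists_disjoint_not_coveredByFinite
      (continuous_truncatedGauge hcont) (monotone_truncatedGauge hmono) (truncatedGauge_zero h0)
      (fun t ht => truncatedGauge_pos (hpos t ht)) hcov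
  rw [hausdorffM_truncatedGauge hcont h0] at hK
  have hdisj' : Pairwise (Function.onFun Disjoint fun σ => Subtype.val '' K σ) := fun σ τ hστ =>
    (disjoint_image_iff Subtype.val_injective).2 (hdisj hστ)
  have hne (σ : ℕ → Bool) : (K σ).Nonempty := nonempty_iff_ne_empty.2 fun hempty =>
    (hK σ).2 (hempty ▸ CoveredByFinite.of_lt_top (by simp))
  refine ⟨range fun σ => Subtype.val '' K σ,
    mk_range_eq_two_power_aleph0 hdisj' fun σ => (hne σ).image _, hdisj'.range_pairwise, ?_⟩
  rintro _ ⟨σ, rfl⟩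
  refine ⟨(hK σ).1.image continuous_subtype_val, Subtype.coe_image_subset Y _, fun hσ =>
    (hK σ).2 ?_⟩
  exact preimage_image_eq (K σ) Subtype.val_injective ▸
    hσ.coveredByFinite.preimage hmono isometry_subtype_coe

end Compact

/-- continuum many disjoint non-σ-finite compact subsets in the compact case. -/
theorem statement_4 {Z : Type*} [MetricSpace Z] (Y : Set Z) (h : ℝ≥0 → ℝ≥0∞)
    (hH : PropertyHInf Y h) (hYcomp : IsCompact Y) :
    ∃ D : Set (Set Z), Cardinal.mk D = 2 ^ Cardinal.aleph0 ∧ D.Pairwise Disjoint ∧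
      ∀ K ∈ D, IsCompact K ∧ K ⊆ Y ∧ ¬ SigmaFiniteSet (hausdorffM h) K :=
  statement_4_general hH.1.hausdorff.mono hH.1.cont hH.1.zero hH.1.hausdorff.pos hH.1.alt hYcomp
    hH.2
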